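/- Every squeezed sphere S_d(U) is strongly edge decomposable. -/

import Mathlib

/-! Combinatorics of simplicial complexes on subsets of ℕ (vertex set `[n] = Finset.Icc 1 n`). -/

/-- `Γ` is a simplicial complex on the vertex set `V`. -/
def SimplicialComplexOn (V : Finset ℕ) (Γ : Set (Finset ℕ)) : Prop :=
  (∀ F ∈ Γ, F ⊆ V) ∧ (∀ v ∈ V, ({v} : Finset ℕ) ∈ Γ) ∧
    (∀ F ∈ Γ, ∀ G, G ⊆ F → G ∈ Γ)

/-- The dimension of a simplicial complex, as an integer (`dim Γ = max {|F| - 1 : F ∈ Γ}`). -/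
noncomputable def sdim (Γ : Set (Finset ℕ)) : ℤ :=
  sSup ((fun F : Finset ℕ => (F.card : ℤ) - 1) '' Γ)

/-- A facet of `Γ` is a maximal face. -/
def IsFacet (Γ : Set (Finset ℕ)) (F : Finset ℕ) : Prop :=
  F ∈ Γ ∧ ∀ G ∈ Γ, F ⊆ G → F = G

/-- A complex is pure if all of its facets have the same cardinality. -/
def PureComplex (Γ : Set (Finset ℕ)) : Prop :=
  ∀ F G, IsFacet Γ F → IsFacet Γ G → F.card = G.card

/-- `fvec Γ k` is the number of faces of `Γ` of cardinality `k`, i.e. `f_{k-1}(Γ)`. -/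
noncomputable def fvec (Γ : Set (Finset ℕ)) (k : ℕ) : ℕ :=
  {F ∈ Γ | F.card = k}.ncard

/-- The `h`-vector of a `(d-1)`-dimensional complex:
`h_i = ∑_{j=0}^i (-1)^{i-j} binom(d-j, d-i) f_{j-1}`. -/
noncomputable def hvec (d : ℕ) (Γ : Set (Finset ℕ)) (i : ℕ) : ℤ :=
  ∑ j ∈ Finset.range (i + 1),
    (-1 : ℤ) ^ (i - j) * (Nat.choose (d - j) (d - i) : ℤ) * (fvec Γ j : ℤ)

/-- The link of `Γ` with respect to a face `F`. -/
def linkOf (Γ : Set (Finset ℕ)) (F : Finset ℕ) : Set (Finset ℕ) :=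
  {G | Disjoint G F ∧ G ∪ F ∈ Γ}

/-- The contraction of `Γ` with respect to `{i,j}`, identifying vertex `i` with `j`. -/
def contraction (Γ : Set (Finset ℕ)) (i j : ℕ) : Set (Finset ℕ) :=
  {F | F ∈ Γ ∧ i ∉ F} ∪ {G | ∃ F ∈ Γ, i ∈ F ∧ G = F.erase i ∪ {j}}

/-- The Link condition: `lk_Γ({i}) ∩ lk_Γ({j}) = lk_Γ({i,j})`. -/
def LinkCondition (Γ : Set (Finset ℕ)) (i j : ℕ) : Prop :=
  linkOf Γ {i} ∩ linkOf Γ {j} = linkOf Γ {i, j}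

open Classical in
/-- The shift operator `C_{ij}` on faces. -/
noncomputable def shiftMap (Γ : Set (Finset ℕ)) (i j : ℕ) (F : Finset ℕ) : Finset ℕ :=
  if i ∈ F ∧ j ∉ F ∧ F.erase i ∪ {j} ∉ Γ then F.erase i ∪ {j} else F

/-- `Shift_{ij}(Γ) = {C_{ij}(F) : F ∈ Γ}`. -/
noncomputable def shiftComplex (Γ : Set (Finset ℕ)) (i j : ℕ) : Set (Finset ℕ) :=
  (shiftMap Γ i j) '' Γ

/-- The join `W * Σ = {F ∪ G : F ⊆ W, G ∈ Σ}` of a vertex set with a complex. -/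
def joinW (W : Finset ℕ) (C : Set (Finset ℕ)) : Set (Finset ℕ) :=
  {H | ∃ F ⊆ W, ∃ G ∈ C, H = F ∪ G}

/-- Strong edge decomposability: boundaries of simplices and `{∅}` are strongly edge
decomposable, and recursively, a pure complex satisfying the Link condition w.r.t. an edge
`{i,j}` whose contraction and link are strongly edge decomposable is
strongly edge decomposable. -/
inductive StronglyEdgeDecomposable : Set (Finset ℕ) → Prop
  | trivialComplex : StronglyEdgeDecomposable {(∅ : Finset ℕ)}
  | simplexBoundary (V : Finset ℕ) (hV : V.Nonempty) :
      StronglyEdgeDecomposable {F | F ⊆ V ∧ F ≠ V}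
  | contract (Γ : Set (Finset ℕ)) (i j : ℕ) (hij : i < j)
      (hpure : PureComplex Γ) (hedge : ({i, j} : Finset ℕ) ∈ Γ)
      (hlc : LinkCondition Γ i j)
      (hcon : StronglyEdgeDecomposable (contraction Γ i j))
      (hlk : StronglyEdgeDecomposable (linkOf Γ {i, j})) :
      StronglyEdgeDecomposable Γ

/-- A shifted complex: `F ∈ Γ`, `i ∈ F`, `i < j`, `j ∈ V` imply `(F \ {i}) ∪ {j} ∈ Γ`. -/
def ShiftedComplex (V : Finset ℕ) (Γ : Set (Finset ℕ)) : Prop :=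
  ∀ F ∈ Γ, ∀ i ∈ F, ∀ j, i < j → j ∈ V → insert j (F.erase i) ∈ Γ

/-- A `d`-subset `F ⊆ [n]` is admissible if `n - k ∉ F` implies `[n-d+k, n-k-1] ⊆ F`. -/
def Admissible (n d : ℕ) (F : Finset ℕ) : Prop :=
  F ⊆ Finset.Icc 1 n ∧ F.card = d ∧
    ∀ k < n, (n - k) ∉ F → Finset.Icc (n - d + k) (n - k - 1) ⊆ F

/-- `Δ(n,d)`, the complex generated by all admissible `d`-subsets of `[n]`; by a theorem of
Kalai this is the symmetric algebraic shifted complex `Δˢ(C(n,d))` of the boundary complex of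
the cyclic `d`-polytope with `n` vertices. -/
def DeltaC (n d : ℕ) : Set (Finset ℕ) :=
  if d = 0 then {(∅ : Finset ℕ)} else {G | ∃ F, Admissible n d F ∧ G ⊆ F}

/-- The increasing enumeration of `V`, as a map `{1, …, |V|} → V ⊆ ℕ` (identity elsewhere). -/
noncomputable def vlabel (V : Finset ℕ) (i : ℕ) : ℕ :=
  if h : i - 1 < V.card then (((V.orderIsoOfFin rfl) ⟨i - 1, h⟩ : V) : ℕ) else i

/-- `Δ(V,d)`: the complex `Δ(|V|,d)` relabeled order-isomorphically onto the vertex set `V`. -/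
noncomputable def DeltaV (V : Finset ℕ) (d : ℕ) : Set (Finset ℕ) :=
  (fun G : Finset ℕ => G.image (vlabel V)) '' DeltaC V.card d
/-! Squeezed balls and spheres (Kalai). Monomials on `[m]` are represented as multisets. -/

/-- `U` is a shifted order ideal of monomials on `[m]`: it contains `1` and all variables
`x_1,…,x_m`, is closed under divisibility, and `u·x_i ∈ U`, `i < j ≤ m` imply `u·x_j ∈ U`.
(A monomial is encoded as the multiset of its variable indices.) -/
def IsShiftedOrderIdeal (m : ℕ) (U : Set (Multiset ℕ)) : Prop :=
  (∀ u ∈ U, ∀ i ∈ u, i ∈ Finset.Icc 1 m) ∧ (0 : Multiset ℕ) ∈ U ∧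
    (∀ i ∈ Finset.Icc 1 m, ({i} : Multiset ℕ) ∈ U) ∧
    (∀ u ∈ U, ∀ v, v ≤ u → v ∈ U) ∧
    (∀ u : Multiset ℕ, ∀ i j : ℕ, i < j → j ≤ m → (i ::ₘ u) ∈ U → (j ::ₘ u) ∈ U)

/-- For a monomial `u = x_{i_1}⋯x_{i_k}` (`i_1 ≤ … ≤ i_k`), the `(d+1)`-set
`F_d(u) = {i_1, i_1+1} ∪ {i_2+2, i_2+3} ∪ ⋯ ∪ {i_k+2(k-1), i_k+2k-1} ∪ [n+2k-d, n]`. -/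
noncomputable def Fd (n d : ℕ) (u : Multiset ℕ) : Finset ℕ :=
  (Finset.range (Multiset.card u)).biUnion
      (fun j => {(u.sort (· ≤ ·)).getD j 0 + 2 * j, (u.sort (· ≤ ·)).getD j 0 + 2 * j + 1}) ∪
    Finset.Icc (n + 2 * Multiset.card u - d) n

/-- The squeezed `d`-ball `B_d(U)`: the complex generated by `{F_d(u) : u ∈ U}`. -/
def squeezedBall (n d : ℕ) (U : Set (Multiset ℕ)) : Set (Finset ℕ) :=
  {G | ∃ u ∈ U, G ⊆ Fd n d u}

/-- The boundary of a pure `d`-dimensional complex `B`: the subcomplex generated by the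
`(d-1)`-dimensional faces (cardinality-`d` faces) contained in exactly one facet. -/
noncomputable def complexBoundary (d : ℕ) (B : Set (Finset ℕ)) : Set (Finset ℕ) :=
  {F | ∃ G, F ⊆ G ∧ G ∈ B ∧ G.card = d ∧
    {H | H ∈ B ∧ H.card = d + 1 ∧ G ⊆ H}.ncard = 1}

/-- The squeezed `(d-1)`-sphere `S_d(U) = ∂ B_d(U)`. -/
noncomputable def squeezedSphere (n d : ℕ) (U : Set (Multiset ℕ)) : Set (Finset ℕ) :=
  complexBoundary d (squeezedBall n d U)

/-! The Stanley–Reisner ideal, the degree reverse lexicographic order, initial ideals and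
generic initial ideals in the polynomial ring `K[x_1,…,x_n]`, realized as
`MvPolynomial (Fin n) K` with the variable `x_i` being `X ⟨i-1⟩`. -/

/-- The squarefree monomial `x_F = ∏_{i ∈ F} x_i` (variable `x_i`, `1 ≤ i ≤ n`, is `X ⟨i-1⟩`). -/
noncomputable def faceMonomial (K : Type*) [CommRing K] (n : ℕ) (F : Finset ℕ) :
    MvPolynomial (Fin n) K :=
  ∏ a ∈ Finset.univ.filter (fun a : Fin n => (a : ℕ) + 1 ∈ F), MvPolynomial.X a

/-- The Stanley–Reisner ideal of a complex `Γ` on `[n]`, generated by the squarefree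
monomials `x_F` with `F ⊆ [n]`, `F ∉ Γ`. -/
noncomputable def srIdeal (K : Type*) [CommRing K] (n : ℕ) (Γ : Set (Finset ℕ)) :
    Ideal (MvPolynomial (Fin n) K) :=
  Ideal.span {f | ∃ F : Finset ℕ, F ⊆ Finset.Icc 1 n ∧ F ∉ Γ ∧ f = faceMonomial K n F}

/-- The degree reverse lexicographic order (induced by `x_1 > x_2 > ⋯`, smaller index =
bigger variable): `u < v` iff `deg u < deg v`, or degrees agree and at the largest index
where `u, v` differ, `u` has the larger exponent. -/
def DegRevLexLT {σ : Type*} [LinearOrder σ] (u v : σ →₀ ℕ) : Prop :=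
  (u.sum fun _ e => e) < (v.sum fun _ e => e) ∨
    ((u.sum fun _ e => e) = (v.sum fun _ e => e) ∧
      ∃ k, v k < u k ∧ ∀ l, k < l → u l = v l)

/-- The initial ideal of `I` w.r.t. the degree reverse lexicographic order: the ideal
spanned by the leading monomials of the elements of `I`. -/
noncomputable def initialIdeal {σ : Type*} [LinearOrder σ] {K : Type*} [Field K]
    (I : Ideal (MvPolynomial σ K)) : Ideal (MvPolynomial σ K) :=
  Ideal.span {m | ∃ f ∈ I, ∃ u ∈ f.support, m = MvPolynomial.monomial u (1 : K) ∧
    ∀ v ∈ f.support, v ≠ u → DegRevLexLT v u}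

/-- The linear change of coordinates of `K[x_1,…,x_n]` associated with a matrix `M`,
`x_j ↦ ∑_i M_{ij} x_i`. -/
noncomputable def genLin {K : Type*} [CommRing K] {n : ℕ} (M : Matrix (Fin n) (Fin n) K) :
    MvPolynomial (Fin n) K →ₐ[K] MvPolynomial (Fin n) K :=
  MvPolynomial.aeval (fun j => ∑ a : Fin n, MvPolynomial.C (M a j) * MvPolynomial.X a)

/-- `J` is the generic initial ideal (w.r.t. degrevlex) of `I`: there is a nonempty Zariski
open subset `U ⊆ GL_n(K)` (the nonvanishing locus of a nonzero polynomial in the matrix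
entries) such that `in(φ(I)) = J` for every `φ ∈ U`. -/
def IsGin {K : Type*} [Field K] {n : ℕ} (I J : Ideal (MvPolynomial (Fin n) K)) : Prop :=
  ∃ p : MvPolynomial (Fin n × Fin n) K, p ≠ 0 ∧
    ∀ M : Matrix (Fin n) (Fin n) K, IsUnit M.det →
      MvPolynomial.eval (fun q => M q.1 q.2) p ≠ 0 →
      initialIdeal (Ideal.map (genLin M) I) = J

/-- The set `G(J)` of (exponent vectors of) minimal monomial generators of a monomial
ideal `J`. -/
def minimalMonomialGens {σ : Type*} {K : Type*} [Field K] (J : Ideal (MvPolynomial σ K)) :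
    Set (σ →₀ ℕ) :=
  {u | MvPolynomial.monomial u (1 : K) ∈ J ∧
    ∀ v : σ →₀ ℕ, v ≤ u → MvPolynomial.monomial v (1 : K) ∈ J → v = u}

/-- The squarefree operation `Φ` on exponent vectors:
`x_{i_1} x_{i_2} ⋯ x_{i_k} ↦ {i_1, i_2+1, …, i_k+k-1}` (`i_1 ≤ i_2 ≤ ⋯ ≤ i_k`). -/
noncomputable def sqfreeOp {n : ℕ} (u : Fin n →₀ ℕ) : Finset ℕ :=
  (List.zipWith (· + ·)
      ((u.toMultiset.map (fun a : Fin n => (a : ℕ) + 1)).sort (· ≤ ·))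
      (List.range (Multiset.card (u.toMultiset)))).toFinset

/-- `Δs` is the symmetric algebraic shifted complex of `Γ`: its Stanley–Reisner ideal is
`Φ(Gin(I_Γ))`, i.e. `Δs` consists of the `F ⊆ [n]` containing no `Φ(u)`, `u ∈ G(Gin(I_Γ))`. -/
def IsSymmetricShift (K : Type*) [Field K] (n : ℕ) (Γ Δs : Set (Finset ℕ)) : Prop :=
  ∃ J : Ideal (MvPolynomial (Fin n) K), IsGin (srIdeal K n Γ) J ∧
    Δs = {F | F ⊆ Finset.Icc 1 n ∧ ∀ u ∈ minimalMonomialGens J, ¬ sqfreeOp u ⊆ F}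

/-- The exponent vector (in `K[x_1,…,x_n]`) of a monomial given as a multiset. -/
noncomputable def multisetToExp (n : ℕ) (u : Multiset ℕ) : Fin n →₀ ℕ :=
  Finsupp.equivFunOnFinite.symm (fun a : Fin n => u.count ((a : ℕ) + 1))
/-! The exterior algebra `E = ⋀⟨e_1, e_2, …⟩` over `K`, exterior face ideals, the reverse
lexicographic order, initial ideals and exterior algebraic shifting. We realize `E` as the
exterior algebra of the `K`-module `ℕ → K`, with `e_i` the image of `Pi.single i 1`. -/

/-- The exterior algebra `⋀ (ℕ → K)` hosting all the exterior face ideals. -/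
abbrev ExtAlg (K : Type*) [Field K] := ExteriorAlgebra K (ℕ → K)

/-- The exterior monomial `e_F = e_{i_1} ∧ ⋯ ∧ e_{i_k}` for `F = {i_1 < ⋯ < i_k}`. -/
noncomputable def eMon (K : Type*) [Field K] (F : Finset ℕ) : ExtAlg K :=
  ((F.sort (· ≤ ·)).map (fun i => ExteriorAlgebra.ι K (Pi.single i (1 : K)))).prod

/-- The exterior face ideal `J_Γ` of a complex `Γ` on the vertex set `V`, generated by the
monomials `e_F` with `F ⊆ V`, `F ∉ Γ`. -/
noncomputable def extFaceIdeal (K : Type*) [Field K] (V : Finset ℕ) (Γ : Set (Finset ℕ)) :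
    Ideal (ExtAlg K) :=
  Ideal.span {x | ∃ F : Finset ℕ, F ⊆ V ∧ F ∉ Γ ∧ x = eMon K F}

/-- The alternating form computing the determinant of the coordinates indexed by `F`. -/
noncomputable def detCoeffAlt (K : Type*) [Field K] (F : Finset ℕ) :
    (ℕ → K) [⋀^Fin F.card]→ₗ[K] K :=
  (Matrix.detRowAlternating).compLinearMap
    (LinearMap.funLeft K K (fun b : Fin F.card => ((F.orderIsoOfFin rfl b : F) : ℕ)))

/-- The coefficient functional of the basis monomial `e_F`: the linear functional on the
exterior algebra giving the coefficient of `e_F` in the monomial basis expansion. -/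
noncomputable def extCoeff (K : Type*) [Field K] (F : Finset ℕ) : ExtAlg K →ₗ[K] K :=
  ExteriorAlgebra.liftAlternating
    (fun i => if h : i = F.card then (detCoeffAlt K F).domDomCongr (finCongr h.symm) else 0)

/-- The reverse lexicographic order (induced by `1 > 2 > ⋯`) on exterior monomials:
`F < G` iff `|F| < |G|`, or the cardinalities agree and the largest element of the
symmetric difference `F Δ G` belongs to `F`. -/
def RevLexLT (F G : Finset ℕ) : Prop :=
  F.card < G.card ∨ (F.card = G.card ∧
    ∃ k, k ∈ F ∧ k ∉ G ∧ ∀ l, k < l → (l ∈ F ↔ l ∈ G))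

/-- The initial ideal of an ideal `I` of the exterior algebra w.r.t. the reverse
lexicographic order: spanned by the leading monomials `e_F` of the elements of `I`. -/
noncomputable def extInitialIdeal (K : Type*) [Field K] (I : Ideal (ExtAlg K)) :
    Ideal (ExtAlg K) :=
  Ideal.span {x | ∃ y ∈ I, ∃ F : Finset ℕ, x = eMon K F ∧ extCoeff K F y ≠ 0 ∧
    ∀ G : Finset ℕ, extCoeff K G y ≠ 0 → G ≠ F → RevLexLT G F}

/-- The linear change of coordinates of `span{e_i : i ∈ V}` (identity elsewhere)
associated with a `|V| × |V|` matrix `M`. -/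
noncomputable def extLinMap (K : Type*) [Field K] (V : Finset ℕ)
    (M : Matrix (Fin V.card) (Fin V.card) K) : (ℕ → K) →ₗ[K] (ℕ → K) where
  toFun v k :=
    if h : k ∈ V then
      ∑ a : Fin V.card,
        M ((V.orderIsoOfFin rfl).symm ⟨k, h⟩) a * v ((V.orderIsoOfFin rfl a : V) : ℕ)
    else v k
  map_add' x y := by
    funext k
    by_cases h : k ∈ V <;> simp [h, mul_add, Finset.sum_add_distrib]
  map_smul' c x := by
    funext k
    by_cases h : k ∈ V <;> simp [h, Finset.mul_sum, mul_left_comm]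

/-- The algebra automorphism of the exterior algebra induced by `extLinMap`. -/
noncomputable def extAlgMap (K : Type*) [Field K] (V : Finset ℕ)
    (M : Matrix (Fin V.card) (Fin V.card) K) : ExtAlg K →ₐ[K] ExtAlg K :=
  ExteriorAlgebra.lift K ⟨(ExteriorAlgebra.ι K).comp (extLinMap K V M),
    fun _ => ExteriorAlgebra.ι_sq_zero _⟩

/-- `Δe` is the exterior algebraic shifted complex of `Γ` (as complexes on the vertex set
`V`): `J_{Δe} = Gin(J_Γ)`, where the generic initial ideal is witnessed by a nonempty
Zariski open subset of `GL(V)` (the nonvanishing locus of a nonzero polynomial in the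
matrix entries). -/
def IsExteriorShift (K : Type*) [Field K] (V : Finset ℕ) (Γ Δe : Set (Finset ℕ)) : Prop :=
  ∃ p : MvPolynomial (Fin V.card × Fin V.card) K, p ≠ 0 ∧
    ∀ M : Matrix (Fin V.card) (Fin V.card) K, IsUnit M.det →
      MvPolynomial.eval (fun q => M q.1 q.2) p ≠ 0 →
      extInitialIdeal K (Ideal.map (extAlgMap K V M) (extFaceIdeal K V Γ)) =
        extFaceIdeal K V Δe

/-- The simplicial complex on `V` whose exterior face ideal is the (monomial) ideal `J`. -/
noncomputable def complexOfExtIdeal (K : Type*) [Field K] (V : Finset ℕ)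
    (J : Ideal (ExtAlg K)) : Set (Finset ℕ) :=
  {F | F ⊆ V ∧ eMon K F ∉ J}

/-- Nongeneric exterior shifting `Δ_φ(Γ)`, defined by `J_{Δ_φ(Γ)} = in(φ(J_Γ))` for an
individual linear change of coordinates `φ` given by the matrix `M`. -/
noncomputable def DeltaPhi (K : Type*) [Field K] (V : Finset ℕ)
    (M : Matrix (Fin V.card) (Fin V.card) K) (Γ : Set (Finset ℕ)) : Set (Finset ℕ) :=
  complexOfExtIdeal K V (extInitialIdeal K (Ideal.map (extAlgMap K V M) (extFaceIdeal K V Γ)))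

/-- The shifting-theoretic upper bound relation for a `(d-1)`-dimensional complex `Γ` on the
vertex set `V`: `Δᵉ(Γ) ⊆ Δ(V,d)`. -/
def ShiftingUBR (K : Type*) [Field K] (V : Finset ℕ) (d : ℕ) (Γ : Set (Finset ℕ)) : Prop :=
  ∀ Δe, IsExteriorShift K V Γ Δe → Δe ⊆ DeltaV V d
/-! Graded pieces, linear systems of parameters, the Cohen–Macaulay property and the strong
Lefschetz property for graded quotients `A = K[x_1,…,x_n]/I`. -/

/-- The degree-`k` homogeneous component of the graded quotient `S/I` (the image of the
degree-`k` homogeneous polynomials). -/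
noncomputable def quotPiece {K : Type*} [Field K] {n : ℕ}
    (I : Ideal (MvPolynomial (Fin n) K)) (k : ℕ) :
    Submodule K (MvPolynomial (Fin n) K ⧸ I) :=
  (MvPolynomial.homogeneousSubmodule (Fin n) K k).map (Ideal.Quotient.mkₐ K I).toLinearMap

/-- `θ_1, …, θ_d` is a linear system of parameters of `S/I`: the `θ_a` are linear forms and
the quotient `S/(I + (θ_1,…,θ_d))` has Krull dimension `≤ 0`. -/
def IsLSOP {K : Type*} [Field K] {n : ℕ} (I : Ideal (MvPolynomial (Fin n) K)) (d : ℕ)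
    (θ : Fin d → MvPolynomial (Fin n) K) : Prop :=
  (∀ a, (θ a).IsHomogeneous 1) ∧
    ringKrullDim (MvPolynomial (Fin n) K ⧸ (I ⊔ Ideal.span (Set.range θ))) ≤ 0

set_option synthInstance.maxHeartbeats 1000000 in
/-- The graded quotient `A = S/I` is Cohen–Macaulay: a linear system of parameters of
length `d = dim A` forms a regular `A`-sequence. -/
def IsCMIdeal {K : Type*} [Field K] {n : ℕ} (I : Ideal (MvPolynomial (Fin n) K)) : Prop :=
  ∃ d : ℕ, ringKrullDim (MvPolynomial (Fin n) K ⧸ I) = d ∧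
    ∃ θ : Fin d → MvPolynomial (Fin n) K, IsLSOP I d θ ∧
      RingTheory.Sequence.IsRegular (MvPolynomial (Fin n) K ⧸ I)
        ((List.ofFn θ).map (⇑(Ideal.Quotient.mk I)))

/-- The graded quotient `A = S/I` has the strong Lefschetz property: `A` is Cohen–Macaulay
and there are an l.s.o.p. `θ_1, …, θ_d` (`d = dim A`) and a linear form `ω` such that
`ω^{s-2i} : (A/θA)_i → (A/θA)_{s-i}` is bijective for `0 ≤ i ≤ s/2`, where
`s = max{k : (A/θA)_k ≠ 0}`. -/
def HasSLPIdeal {K : Type*} [Field K] {n : ℕ} (I : Ideal (MvPolynomial (Fin n) K)) : Prop :=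
  IsCMIdeal I ∧
    ∃ d : ℕ, ringKrullDim (MvPolynomial (Fin n) K ⧸ I) = d ∧
      ∃ θ : Fin d → MvPolynomial (Fin n) K, IsLSOP I d θ ∧
        ∃ ω : MvPolynomial (Fin n) K, ω.IsHomogeneous 1 ∧
          ∃ s : ℕ,
            (quotPiece (I ⊔ Ideal.span (Set.range θ)) s ≠ ⊥ ∧
              ∀ k, s < k → quotPiece (I ⊔ Ideal.span (Set.range θ)) k = ⊥) ∧
            ∀ i : ℕ, 2 * i ≤ s →
              Set.BijOn
                (fun x => (Ideal.Quotient.mk (I ⊔ Ideal.span (Set.range θ)) ω) ^ (s - 2 * i) * x)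
                (quotPiece (I ⊔ Ideal.span (Set.range θ)) i)
                (quotPiece (I ⊔ Ideal.span (Set.range θ)) (s - i))

/-- A simplicial complex is Cohen–Macaulay over `K` if its Stanley–Reisner ring is. -/
def ComplexCM (K : Type*) [Field K] (n : ℕ) (Γ : Set (Finset ℕ)) : Prop :=
  IsCMIdeal (srIdeal K n Γ)

/-- A `(d-1)`-dimensional complex `Γ` has the strong Lefschetz property if `h_d(Γ) > 0` and
its Stanley–Reisner ring has the strong Lefschetz property. -/
def ComplexSLP (K : Type*) [Field K] (n d : ℕ) (Γ : Set (Finset ℕ)) : Prop :=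
  0 < hvec d Γ d ∧ HasSLPIdeal (srIdeal K n Γ)

/-- A `1`-dimensional simplicial sphere (a cycle): a complex all of whose faces are edges or
smaller, every vertex lying in exactly two edges, whose edge graph is connected. -/
def IsCycleComplex (V : Finset ℕ) (Γ : Set (Finset ℕ)) : Prop :=
  SimplicialComplexOn V Γ ∧ (∀ F ∈ Γ, F.card ≤ 2) ∧
    (∀ v ∈ V, {e | e ∈ Γ ∧ e.card = 2 ∧ v ∈ e}.ncard = 2) ∧
    ∀ u ∈ V, ∀ v ∈ V,
      Relation.ReflTransGen (fun a b : ℕ => ({a, b} : Finset ℕ) ∈ Γ) u v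

/-!
The facets of a squeezed ball are unions of pairs `{a i + 2 i, a i + 2 i + 1}` for the weakly
increasing sequences `a` in some upper set `W` of a poset, and the squeezed sphere consists of the
common faces of the ball of `W` and of the ball of the complement of `W`. Let `l` be the least
value of the sequences in `W`. The edge `{l, l + 1}` satisfies the Link condition; contracting it
removes from `W` the sequences starting with `l`, and its link is the sphere of the sequences that
remain when the first value `l` is deleted from these. Both spheres are again given by an upper
set, so one concludes by induction. This treats odd `d`. For even `d`, the squeezed sphere is the
link of the vertex `n + 1` in such a sphere of one dimension more, and this link passes through the
whole induction since the vertex `n + 1` never meets the contracted edge.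
-/

section Complexes

variable {Γ B : Set (Finset ℕ)} {S T : Finset ℕ} {i j : ℕ}

theorem isLowerSet_linkOf (hΓ : IsLowerSet Γ) (T : Finset ℕ) : IsLowerSet (linkOf Γ T) :=
  fun _ _ hHG hG => ⟨hG.1.mono_left hHG, hΓ (Finset.union_subset_union_left hHG) hG.2⟩

theorem linkOf_comm (hST : Disjoint S T) :
    linkOf (linkOf Γ S) T = linkOf (linkOf Γ T) S := by
  ext G
  simp only [linkOf, Set.mem_ofPred_eq, Finset.disjoint_union_left, hST, hST.symm,
    Finset.union_right_comm G S T, and_true]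
  tauto

theorem mem_contraction_iff (hΓ : IsLowerSet Γ) (hij : i ≠ j) {G : Finset ℕ} :
    G ∈ contraction Γ i j ↔ i ∉ G ∧ (G ∈ Γ ∨ j ∈ G ∧ insert i (G.erase j) ∈ Γ) := by
  constructor
  · rintro (⟨hG, hi⟩ | ⟨F, hF, hi, rfl⟩)
    · exact ⟨hi, .inl hG⟩
    · refine ⟨by simp [hij], .inr ⟨by simp, hΓ ?_ hF⟩⟩
      intro x hx
      grind
  · rintro ⟨hi, hG | ⟨hj, hG⟩⟩
    · exact .inl ⟨hG, hi⟩
    · exact .inr ⟨_, hG, by simp, by grind⟩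

theorem contraction_linkOf (hΓ : IsLowerSet Γ) (hij : i ≠ j) (hi : i ∉ T) (hj : j ∉ T) :
    contraction (linkOf Γ T) i j = linkOf (contraction Γ i j) T := by
  ext G
  have hG : insert i ((G ∪ T).erase j) = insert i (G.erase j) ∪ T := by grind
  rw [mem_contraction_iff (isLowerSet_linkOf hΓ T) hij]
  simp only [linkOf, Set.mem_ofPred_eq, mem_contraction_iff hΓ hij, hG, Finset.disjoint_left]
  grind

theorem linkCondition_iff (hΓ : IsLowerSet Γ) :
    LinkCondition Γ i j ↔ ∀ G, i ∉ G → j ∉ G → insert i G ∈ Γ → insert j G ∈ Γ →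
      insert i (insert j G) ∈ Γ := by
  have hpair (G : Finset ℕ) : G ∪ {i, j} = insert i (insert j G) := by grind
  simp only [LinkCondition, linkOf, Set.ext_iff, Set.mem_inter_iff, Set.mem_ofPred_eq, hpair,
    Finset.disjoint_insert_right, Finset.disjoint_singleton_right, Finset.union_singleton]
  refine forall_congr' fun G => ⟨fun h hi hj hiG hjG => (h.1 ⟨⟨hi, hiG⟩, hj, hjG⟩).2,
    fun h => ⟨fun ⟨⟨hi, hiG⟩, hj, hjG⟩ => ⟨⟨hi, hj⟩, h hi hj hiG hjG⟩, fun ⟨⟨hi, hj⟩, hG⟩ =>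
      ⟨⟨hi, hΓ ?_ hG⟩, hj, hΓ ?_ hG⟩⟩⟩ <;> intro x <;> grind

theorem LinkCondition.linkOf (hΓ : IsLowerSet Γ) (h : LinkCondition Γ i j) (hi : i ∉ T)
    (hj : j ∉ T) : LinkCondition (linkOf Γ T) i j := by
  rw [linkCondition_iff hΓ] at h
  rw [linkCondition_iff (isLowerSet_linkOf hΓ T)]
  rintro G hiG hjG ⟨-, hGi⟩ ⟨hjGT, hGj⟩
  rw [Finset.insert_union] at hGi hGj
  refine ⟨Finset.disjoint_insert_left.2 ⟨hi, hjGT⟩, ?_⟩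
  rw [Finset.insert_union, Finset.insert_union]
  exact h _ (by grind) (by grind) hGi hGj

theorem pureComplex_linkOf (hΓ : PureComplex Γ) (T : Finset ℕ) : PureComplex (linkOf Γ T) := by
  have isFacet_union {F : Finset ℕ} (hF : IsFacet (linkOf Γ T) F) :
      IsFacet Γ (F ∪ T) := by
    refine ⟨hF.1.2, fun G hG hFG => ?_⟩
    have hTG : T ⊆ G := Finset.subset_union_right.trans hFG
    have hGT : G \ T ∪ T = G := Finset.sdiff_union_of_subset hTG
    rw [← hGT, ← hF.2 (G \ T) ⟨Finset.sdiff_disjoint, by rwa [hGT]⟩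
      (Finset.subset_sdiff.2 ⟨Finset.subset_union_left.trans hFG, hF.1.1⟩)]
  intro F G hF hG
  have hcard := hΓ _ _ (isFacet_union hF) (isFacet_union hG)
  rwa [Finset.card_union_of_disjoint hF.1.1, Finset.card_union_of_disjoint hG.1.1,
    Nat.add_right_cancel_iff] at hcard

theorem pureComplex_of_exists_card_eq {k : ℕ}
    (h : ∀ G ∈ Γ, ∃ H ∈ Γ, G ⊆ H ∧ H.card = k) : PureComplex Γ := by
  have card_eq {F : Finset ℕ} (hF : IsFacet Γ F) : F.card = k := by
    obtain ⟨H, hH, hFH, hcard⟩ := h F hF.1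
    rwa [hF.2 H hH hFH]
  exact fun F G hF hG => (card_eq hF).trans (card_eq hG).symm

theorem linkOf_simplexBoundary_eq {V : Finset ℕ} (hTV : T ⊆ V) :
    linkOf {F | F ⊆ V ∧ F ≠ V} T = {F | F ⊆ V \ T ∧ F ≠ V \ T} := by
  ext G
  simp only [linkOf, Set.mem_ofPred_eq, Finset.subset_sdiff, Finset.union_subset_iff, hTV,
    and_true]
  constructor
  · rintro ⟨hGT, hGV, hne⟩
    exact ⟨⟨hGV, hGT⟩, fun h => hne (h ▸ Finset.sdiff_union_of_subset hTV)⟩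
  · rintro ⟨⟨hGV, hGT⟩, hne⟩
    exact ⟨hGT, hGV, fun h => hne (h ▸ (Finset.union_sdiff_cancel_right hGT).symm)⟩

theorem StronglyEdgeDecomposable.linkOf_simplexBoundary {V : Finset ℕ} (hTV : T ⊂ V) :
    StronglyEdgeDecomposable (linkOf {F | F ⊆ V ∧ F ≠ V} T) := by
  rw [linkOf_simplexBoundary_eq hTV.1]
  exact .simplexBoundary _ (Finset.sdiff_nonempty.2 hTV.2)

theorem StronglyEdgeDecomposable.linkOf_of_contract (hΓ : IsLowerSet Γ) (hpure : PureComplex Γ)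
    (hij : i < j) (hT : T ∈ linkOf Γ {i, j}) (hlc : LinkCondition Γ i j)
    (hcon : StronglyEdgeDecomposable (linkOf (contraction Γ i j) T))
    (hlk : StronglyEdgeDecomposable (linkOf (linkOf Γ {i, j}) T)) :
    StronglyEdgeDecomposable (linkOf Γ T) := by
  obtain ⟨hdisj, hedge⟩ := hT
  have hi : i ∉ T := fun hi => Finset.disjoint_left.1 hdisj hi (by simp)
  have hj : j ∉ T := fun hj => Finset.disjoint_left.1 hdisj hj (by simp)
  refine .contract _ i j hij (pureComplex_linkOf hpure T) ⟨hdisj.symm, by rwa [Finset.union_comm]⟩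
    (hlc.linkOf hΓ hi hj) ?_ ?_
  · rwa [contraction_linkOf hΓ hij.ne hi hj]
  · rwa [linkOf_comm hdisj]

theorem complexBoundary_linkOf (d : ℕ) (T : Finset ℕ) :
    complexBoundary d (linkOf B T) = linkOf (complexBoundary (d + T.card) B) T := by
  have ncard_eq {G : Finset ℕ} (hG : Disjoint G T) :
      {H | H ∈ linkOf B T ∧ H.card = d + 1 ∧ G ⊆ H}.ncard =
        {H | H ∈ B ∧ H.card = d + T.card + 1 ∧ G ∪ T ⊆ H}.ncard := by
    refine Set.ncard_congr (fun H _ => H ∪ T) ?_ ?_ ?_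
    · rintro H ⟨⟨hHT, hH⟩, hcard, hGH⟩
      exact ⟨hH, by rw [Finset.card_union_of_disjoint hHT]; omega,
        Finset.union_subset_union_left hGH⟩
    · rintro H K ⟨⟨hHT, -⟩, -⟩ ⟨⟨hKT, -⟩, -⟩ hHK
      rw [← Finset.union_sdiff_cancel_right hHT, ← Finset.union_sdiff_cancel_right hKT, hHK]
    · rintro H ⟨hH, hcard, hGH⟩
      obtain ⟨hGH, hTH⟩ := Finset.union_subset_iff.1 hGH
      have hHT : H \ T ∪ T = H := Finset.sdiff_union_of_subset hTH
      exact ⟨H \ T, ⟨⟨Finset.sdiff_disjoint, by rwa [hHT]⟩,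
        by rw [Finset.card_sdiff_of_subset hTH]; omega, Finset.subset_sdiff.2 ⟨hGH, hG⟩⟩, hHT⟩
  ext F
  constructor
  · rintro ⟨G, hFG, ⟨hGT, hG⟩, hcard, hone⟩
    exact ⟨hGT.mono_left hFG, G ∪ T, Finset.union_subset_union_left hFG, hG,
      by rw [Finset.card_union_of_disjoint hGT, hcard], ncard_eq hGT ▸ hone⟩
  · rintro ⟨hFT, G, hFG, hG, hcard, hone⟩
    obtain ⟨hFG, hTG⟩ := Finset.union_subset_iff.1 hFG
    have hGT : G \ T ∪ T = G := Finset.sdiff_union_of_subset hTG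
    refine ⟨G \ T, Finset.subset_sdiff.2 ⟨hFG, hFT⟩, ⟨Finset.sdiff_disjoint, by rwa [hGT]⟩,
      by rw [Finset.card_sdiff_of_subset hTG]; omega, ?_⟩
    rwa [ncard_eq Finset.sdiff_disjoint, hGT]

end Complexes

section PairUnion

variable {e : ℕ} {a b c : Fin e →o ℕ} {i j : Fin e} {x : ℕ}

/-- The union of the pairs `{a i + 2 i, a i + 2 i + 1}` of a weakly increasing sequence `a`. Such
unions are the facets of squeezed balls, with indices starting from `0`. -/
def pairUnion (a : Fin e →o ℕ) : Finset ℕ :=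
  Finset.univ.biUnion fun i => {a i + 2 * (i : ℕ), a i + 2 * (i : ℕ) + 1}

theorem mem_pairUnion :
    x ∈ pairUnion a ↔ ∃ i, x = a i + 2 * (i : ℕ) ∨ x = a i + 2 * (i : ℕ) + 1 := by
  simp [pairUnion]

theorem left_mem_pairUnion (a : Fin e →o ℕ) (i : Fin e) : a i + 2 * (i : ℕ) ∈ pairUnion a :=
  mem_pairUnion.2 ⟨i, .inl rfl⟩

theorem right_mem_pairUnion (a : Fin e →o ℕ) (i : Fin e) :
    a i + 2 * (i : ℕ) + 1 ∈ pairUnion a :=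
  mem_pairUnion.2 ⟨i, .inr rfl⟩

theorem right_lt_left (a : Fin e →o ℕ) (hij : i < j) :
    a i + 2 * (i : ℕ) + 1 < a j + 2 * (j : ℕ) := by
  have := a.monotone hij.le
  omega

theorem right_ne_left (a : Fin e →o ℕ) (i j : Fin e) :
    a i + 2 * (i : ℕ) + 1 ≠ a j + 2 * (j : ℕ) := by
  rcases lt_trichotomy i j with h | rfl | h
  · exact (right_lt_left a h).ne
  · omega
  · have := right_lt_left a h
    omega

theorem right_injective (a : Fin e →o ℕ) :
    Function.Injective fun i : Fin e => a i + 2 * (i : ℕ) + 1 :=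
  StrictMono.injective fun i j hij => by
    have := right_lt_left a hij
    omega

theorem card_pairUnion (a : Fin e →o ℕ) : (pairUnion a).card = 2 * e := by
  rw [pairUnion, Finset.card_biUnion]
  · simp [mul_comm]
  · intro i _ j _ hij
    rcases lt_or_gt_of_ne hij with h | h
    all_goals
      have := right_lt_left a h
      simp only [Function.onFun, Finset.disjoint_left, Finset.mem_insert, Finset.mem_singleton]
      omega

theorem mem_pairUnion_inf (ha : x ∈ pairUnion a) (hb : x ∈ pairUnion b) :
    x ∈ pairUnion (a ⊓ b) := by
  obtain ⟨i, hi⟩ := mem_pairUnion.1 ha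
  obtain ⟨k, hk⟩ := mem_pairUnion.1 hb
  simp only [mem_pairUnion, OrderHom.coe_inf, Pi.inf_apply]
  rcases lt_trichotomy i k with h | rfl | h
  · exact ⟨k, by have := a.monotone h.le; have : (i : ℕ) < k := h; omega⟩
  · exact ⟨i, by omega⟩
  · exact ⟨i, by have := b.monotone h.le; have : (k : ℕ) < i := h; omega⟩

theorem mem_pairUnion_sup (ha : x ∈ pairUnion a) (hb : x ∈ pairUnion b) :
    x ∈ pairUnion (a ⊔ b) := by
  obtain ⟨i, hi⟩ := mem_pairUnion.1 ha
  obtain ⟨k, hk⟩ := mem_pairUnion.1 hb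
  simp only [mem_pairUnion, OrderHom.coe_sup, Pi.sup_apply]
  rcases lt_trichotomy i k with h | rfl | h
  · exact ⟨i, by have := b.monotone h.le; have : (i : ℕ) < k := h; omega⟩
  · exact ⟨i, by omega⟩
  · exact ⟨k, by have := a.monotone h.le; have : (k : ℕ) < i := h; omega⟩

theorem mem_pairUnion_sup_const {l : ℕ} (hx : x ∈ pairUnion a) (hl : l ≤ x) :
    x ∈ pairUnion (a ⊔ OrderHom.const (Fin e) l) := by
  obtain ⟨i, hi⟩ := mem_pairUnion.1 hx
  simp only [mem_pairUnion, OrderHom.coe_sup, Pi.sup_apply, OrderHom.const_coe_coe,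
    Function.const_apply]
  by_cases h : l ≤ a i
  · exact ⟨i, by omega⟩
  · have hki : (x - l) / 2 ≤ i := by omega
    have : a ⟨(x - l) / 2, hki.trans_lt i.isLt⟩ ≤ a i := a.monotone hki
    exact ⟨⟨(x - l) / 2, hki.trans_lt i.isLt⟩, by dsimp only; omega⟩

theorem self_mem_pairUnion_sup_const {l : ℕ} (hl : a i ≤ l) :
    l ∈ pairUnion (a ⊔ OrderHom.const (Fin e) l) := by
  obtain ⟨k, hk⟩ : ∃ k : Fin e, (k : ℕ) = 0 := ⟨⟨0, i.pos⟩, rfl⟩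
  have hki : a k ≤ a i := a.monotone (Fin.le_def.2 (by omega))
  have hkl : (a ⊔ OrderHom.const (Fin e) l) k + 2 * (k : ℕ) = l := by
    rw [hk, mul_zero, add_zero]
    exact max_eq_right (hki.trans hl)
  exact mem_pairUnion.2 ⟨k, .inl hkl.symm⟩

theorem exists_right_notMem_pairUnion (hca : c < a) :
    ∃ j, c j < a j ∧ a j + 2 * (j : ℕ) + 1 ∉ pairUnion c := by
  obtain ⟨hle, i, hi⟩ := Pi.lt_def.1 (show ⇑c < ⇑a from hca)
  obtain ⟨j, hj, hmax⟩ := (Finset.univ.filter fun j => c j < a j).exists_max_image id ⟨i, by simpa⟩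
  simp only [Finset.mem_filter, Finset.mem_univ, true_and, id] at hj hmax
  refine ⟨j, hj, fun hmem => ?_⟩
  obtain ⟨k, hk⟩ := mem_pairUnion.1 hmem
  have hlek : c k ≤ a k := hle k
  rcases lt_trichotomy j k with h | rfl | h
  · have : ¬ c k < a k := fun hlt => (hmax k hlt).not_gt h
    have := right_lt_left a h
    omega
  · omega
  · have := right_lt_left a h
    omega

theorem exists_left_notMem_pairUnion (hac : a < c) : ∃ j, a j + 2 * (j : ℕ) ∉ pairUnion c := by
  obtain ⟨hle, i, hi⟩ := Pi.lt_def.1 (show ⇑a < ⇑c from hac)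
  obtain ⟨j, hj, hmin⟩ := (Finset.univ.filter fun j => a j < c j).exists_min_image id ⟨i, by simpa⟩
  simp only [Finset.mem_filter, Finset.mem_univ, true_and, id] at hj hmin
  refine ⟨j, fun hmem => ?_⟩
  obtain ⟨k, hk⟩ := mem_pairUnion.1 hmem
  have hlek : a k ≤ c k := hle k
  rcases lt_trichotomy j k with h | rfl | h
  · have := right_lt_left a h
    omega
  · omega
  · have : ¬ a k < c k := fun hlt => (hmin k hlt).not_gt h
    have := right_lt_left a h
    omega

theorem eq_of_pairUnion_subset (h : pairUnion a ⊆ pairUnion b) : a = b := by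
  refine le_antisymm ?_ ?_
  · by_contra hab
    obtain ⟨j, -, hj⟩ := exists_right_notMem_pairUnion (inf_lt_left.2 hab)
    exact hj (mem_pairUnion_inf (right_mem_pairUnion a j) (h (right_mem_pairUnion a j)))
  · by_contra hba
    obtain ⟨j, hj⟩ := exists_left_notMem_pairUnion (left_lt_sup.2 hba)
    exact hj (mem_pairUnion_sup (left_mem_pairUnion a j) (h (left_mem_pairUnion a j)))

/-- Moves the pair of index `j`, and those below it with the same value, one step to the left: the
exchange of the right end of the pair `j` for a new vertex. For `a j = 0` nothing moves. -/
def shiftDown (a : Fin e →o ℕ) (j : Fin e) : Fin e →o ℕ where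
  toFun i := if i ≤ j then min (a i) (a j - 1) else a i
  monotone' i k hik := by
    have := a.monotone hik
    dsimp only
    split_ifs with hi hk
    · omega
    · omega
    · exact absurd (hik.trans ‹_›) hi
    · exact this

/-- Moves the pair of index `j`, and those above it with the same value, one step to the right:
the exchange of the left end of the pair `j` for a new vertex. -/
def shiftUp (a : Fin e →o ℕ) (j : Fin e) : Fin e →o ℕ where
  toFun i := if j ≤ i then max (a i) (a j + 1) else a i
  monotone' i k hik := by
    have := a.monotone hik
    dsimp only
    split_ifs with hi hk
    · omega
    · exact absurd (hi.trans hik) ‹_›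
    · omega
    · exact this

theorem shiftDown_apply (a : Fin e →o ℕ) (i j : Fin e) :
    shiftDown a j i = if i ≤ j then min (a i) (a j - 1) else a i :=
  rfl

theorem shiftUp_apply (a : Fin e →o ℕ) (i j : Fin e) :
    shiftUp a j i = if j ≤ i then max (a i) (a j + 1) else a i :=
  rfl

theorem shiftDown_apply_self (a : Fin e →o ℕ) (j : Fin e) : shiftDown a j j = a j - 1 := by
  simp [shiftDown_apply]

theorem shiftUp_apply_self (a : Fin e →o ℕ) (j : Fin e) : shiftUp a j j = a j + 1 := by
  simp [shiftUp_apply]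

theorem shiftDown_le (a : Fin e →o ℕ) (j : Fin e) : shiftDown a j ≤ a := fun i => by
  change shiftDown a j i ≤ a i
  rw [shiftDown_apply]
  split_ifs <;> omega

theorem le_shiftDown (hca : c ≤ a) (hj : c j < a j) : c ≤ shiftDown a j := fun i => by
  have hi : c i ≤ a i := hca i
  change c i ≤ shiftDown a j i
  rw [shiftDown_apply]
  split_ifs with h
  · have := c.monotone h
    omega
  · exact hi

theorem erase_right_subset_pairUnion_shiftDown (a : Fin e →o ℕ) (j : Fin e) :
    (pairUnion a).erase (a j + 2 * (j : ℕ) + 1) ⊆ pairUnion (shiftDown a j) := by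
  intro x hx
  obtain ⟨hne, hx⟩ := Finset.mem_erase.1 hx
  obtain ⟨i, hi⟩ := mem_pairUnion.1 hx
  simp only [mem_pairUnion, shiftDown_apply]
  by_cases hrun : i ≤ j ∧ a i = a j ∧ x = a i + 2 * (i : ℕ) + 1 ∧ 0 < a j
  · obtain ⟨hij, hai, rfl, hpos⟩ := hrun
    have hlt : (i : ℕ) < j := lt_of_le_of_ne hij fun h => hne (by omega)
    obtain ⟨k, hk⟩ : ∃ k : Fin e, (k : ℕ) = i + 1 := ⟨⟨i + 1, by omega⟩, rfl⟩
    have hik : a i ≤ a k := a.monotone (Fin.le_def.2 (by omega))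
    have hkj : k ≤ j := Fin.le_def.2 (by omega)
    exact ⟨k, by rw [if_pos hkj]; omega⟩
  · refine ⟨i, ?_⟩
    split_ifs with hij
    · have := a.monotone hij
      omega
    · exact hi

theorem erase_left_subset_pairUnion_shiftUp (a : Fin e →o ℕ) (j : Fin e) :
    (pairUnion a).erase (a j + 2 * (j : ℕ)) ⊆ pairUnion (shiftUp a j) := by
  intro x hx
  obtain ⟨hne, hx⟩ := Finset.mem_erase.1 hx
  obtain ⟨i, hi⟩ := mem_pairUnion.1 hx
  simp only [mem_pairUnion, shiftUp_apply]
  by_cases hrun : j ≤ i ∧ a i = a j ∧ x = a i + 2 * (i : ℕ)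
  · obtain ⟨hji, hai, rfl⟩ := hrun
    have hlt : (j : ℕ) < i := lt_of_le_of_ne hji fun h => hne (by omega)
    obtain ⟨k, hk⟩ : ∃ k : Fin e, (k : ℕ) = i - 1 := ⟨⟨i - 1, by omega⟩, rfl⟩
    have hki : a k ≤ a i := a.monotone (Fin.le_def.2 (by omega))
    have hjk : j ≤ k := Fin.le_def.2 (by omega)
    exact ⟨k, by rw [if_pos hjk]; omega⟩
  · refine ⟨i, ?_⟩
    split_ifs with hji
    · have := a.monotone hji
      omega
    · exact hi

theorem right_shiftDown_mem_erase (hj : 0 < a j) (i : Fin e) :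
    shiftDown a j i + 2 * (i : ℕ) + 1 ∈ (pairUnion a).erase (a j + 2 * (j : ℕ) + 1) := by
  rw [shiftDown_apply, Finset.mem_erase]
  split_ifs with hij
  · have : (i : ℕ) ≤ j := hij
    refine ⟨by omega, mem_pairUnion.2 ⟨i, ?_⟩⟩
    have := a.monotone hij
    omega
  · exact ⟨(right_injective a).ne (not_le.1 hij).ne', right_mem_pairUnion a i⟩

theorem le_of_erase_right_subset (h : (pairUnion a).erase (a j + 2 * (j : ℕ) + 1) ⊆ pairUnion c) :
    c ≤ a := by
  by_contra hca
  obtain ⟨k, hk⟩ := exists_left_notMem_pairUnion (left_lt_sup.2 hca)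
  exact hk (mem_pairUnion_sup (left_mem_pairUnion a k)
    (h (Finset.mem_erase.2 ⟨(right_ne_left a j k).symm, left_mem_pairUnion a k⟩)))

theorem eq_or_eq_shiftDown (h : (pairUnion a).erase (a j + 2 * (j : ℕ) + 1) ⊆ pairUnion c) :
    c = a ∨ c = shiftDown a j := by
  by_contra! hne
  have hca : c < a := (le_of_erase_right_subset h).lt_of_ne hne.1
  obtain ⟨k, hck, hk⟩ := exists_right_notMem_pairUnion hca
  obtain rfl : k = j := by
    by_contra hkj
    exact hk (h (Finset.mem_erase.2 ⟨(right_injective a).ne hkj, right_mem_pairUnion a k⟩))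
  obtain ⟨i, -, hi⟩ := exists_right_notMem_pairUnion ((le_shiftDown hca.le hck).lt_of_ne hne.2)
  exact hi (h (right_shiftDown_mem_erase (Nat.zero_lt_of_lt hck) i))

theorem exists_ne_erase_subset_pairUnion (hpos : ∀ i, 0 < a i) (hx : x ∈ pairUnion a) :
    ∃ b, b ≠ a ∧ (pairUnion a).erase x ⊆ pairUnion b := by
  obtain ⟨j, rfl | rfl⟩ := mem_pairUnion.1 hx
  · refine ⟨shiftUp a j, fun h => ?_, erase_left_subset_pairUnion_shiftUp a j⟩
    have := congr($h j)
    rw [shiftUp_apply_self] at this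
    omega
  · refine ⟨shiftDown a j, fun h => ?_, erase_right_subset_pairUnion_shiftDown a j⟩
    have := congr($h j)
    have := hpos j
    rw [shiftDown_apply_self] at *
    omega

end PairUnion

section PairSphere

variable {e : ℕ} {W : Set (Fin e →o ℕ)} {G : Finset ℕ}

/-- The complex whose facets are the unions of pairs of the sequences in `W`. -/
def pairBall (W : Set (Fin e →o ℕ)) : Set (Finset ℕ) :=
  {G | ∃ a ∈ W, G ⊆ pairUnion a}

/-- The common faces of the ball of `W` and of the ball of the complement of `W`. For a squeezed
family `W` this is the boundary of the ball of `W`, see `complexBoundary_pairBall`. -/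
def pairSphere (W : Set (Fin e →o ℕ)) : Set (Finset ℕ) :=
  pairBall W ∩ pairBall Wᶜ

theorem isLowerSet_pairBall (W : Set (Fin e →o ℕ)) : IsLowerSet (pairBall W) :=
  fun _ _ hHG ⟨a, ha, hG⟩ => ⟨a, ha, hHG.trans hG⟩

theorem isLowerSet_pairSphere (W : Set (Fin e →o ℕ)) : IsLowerSet (pairSphere W) :=
  (isLowerSet_pairBall W).inter (isLowerSet_pairBall Wᶜ)

theorem exists_shiftDown_crossing {x y : Fin e →o ℕ} (hyx : y ≤ x) (hGx : G ⊆ pairUnion x)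
    (hGy : G ⊆ pairUnion y) (hW : ¬ (x ∈ W ↔ y ∈ W)) :
    ∃ p j, G ⊆ (pairUnion p).erase (p j + 2 * (j : ℕ) + 1) ∧ ¬ (p ∈ W ↔ shiftDown p j ∈ W) := by
  have : WellFoundedLT (Fin e →o ℕ) := StrictMono.wellFoundedLT (f := fun a : Fin e →o ℕ => ⇑a)
    fun _ _ h => h
  obtain ⟨p, ⟨hyp, hGp, hpW⟩, hmin⟩ := wellFounded_lt.has_min
    {p : Fin e →o ℕ | y ≤ p ∧ G ⊆ pairUnion p ∧ ¬ (p ∈ W ↔ y ∈ W)} ⟨x, hyx, hGx, hW⟩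
  have hne : y ≠ p := by
    rintro rfl
    exact hpW Iff.rfl
  obtain ⟨j, hlt, hj⟩ := exists_right_notMem_pairUnion (hyp.lt_of_ne hne)
  have hG : G ⊆ (pairUnion p).erase (p j + 2 * (j : ℕ) + 1) :=
    fun g hg => Finset.mem_erase.2 ⟨fun h => hj (h ▸ hGy hg), hGp hg⟩
  have hshift : shiftDown p j < p := (shiftDown_le p j).lt_of_ne fun h => by
    have := congr($h j)
    rw [shiftDown_apply_self] at this
    omega
  refine ⟨p, j, hG, fun h => hmin _ ⟨le_shiftDown hyp hlt,
    hG.trans (erase_right_subset_pairUnion_shiftDown p j), fun h' => hpW (h.trans h')⟩ hshift⟩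

theorem pairSphere_singleton {c : Fin e →o ℕ} (hc : ∀ i, 0 < c i) :
    pairSphere {c} = {G | G ⊆ pairUnion c ∧ G ≠ pairUnion c} := by
  ext G
  constructor
  · rintro ⟨⟨_, rfl, hG⟩, b, hb, hGb⟩
    refine ⟨hG, ?_⟩
    rintro rfl
    exact hb (eq_of_pairUnion_subset hGb).symm
  · rintro ⟨hG, hne⟩
    obtain ⟨x, hx, hxG⟩ := Finset.exists_of_ssubset (hG.ssubset_of_ne hne)
    obtain ⟨b, hb, hsub⟩ := exists_ne_erase_subset_pairUnion hc hx
    exact ⟨⟨c, rfl, hG⟩, b, hb, (Finset.subset_erase.2 ⟨hG, hxG⟩).trans hsub⟩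

/-- A squeezed family: a nonempty upper set in the poset of weakly increasing sequences with
values in `[l, M]`, where `l` is positive. It encodes a shifted order ideal of monomials. -/
structure IsSqueezedFamily (l M : ℕ) (W : Set (Fin e →o ℕ)) : Prop where
  pos : 0 < l
  lower : ∀ a ∈ W, ∀ i, l ≤ a i
  upper : ∀ a ∈ W, ∀ i, a i ≤ M
  mem_of_le : ∀ a ∈ W, ∀ b, a ≤ b → (∀ i, b i ≤ M) → b ∈ W
  const_mem : OrderHom.const (Fin e) M ∈ W

namespace IsSqueezedFamily

variable {l M : ℕ}

theorem exists_ridge (hW : IsSqueezedFamily l M W) (hG : G ∈ pairSphere W) :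
    ∃ p j, G ⊆ (pairUnion p).erase (p j + 2 * (j : ℕ) + 1) ∧ ¬ (p ∈ W ↔ shiftDown p j ∈ W) := by
  obtain ⟨⟨a, ha, hGa⟩, b, hb, hGb⟩ := hG
  by_cases hM : ∀ i, b i ≤ M
  · have hab : a ⊓ b ∉ W := fun h => hb (hW.mem_of_le _ h b inf_le_right hM)
    exact exists_shiftDown_crossing inf_le_left hGa
      (fun g hg => mem_pairUnion_inf (hGa hg) (hGb hg)) (by tauto)
  · have hab : a ⊔ b ∉ W := fun h =>
      hM fun i => ((le_sup_right : b ≤ a ⊔ b) i).trans (hW.upper _ h i)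
    exact exists_shiftDown_crossing le_sup_left
      (fun g hg => mem_pairUnion_sup (hGa hg) (hGb hg)) hGa (by tauto)

theorem exists_ridge_unique (hW : IsSqueezedFamily l M W) (hG : G ∈ pairSphere W) :
    ∃ R ∈ pairSphere W, G ⊆ R ∧ R.card = 2 * e - 1 ∧
      ∃ w ∈ W, ∀ c ∈ W, R ⊆ pairUnion c ↔ c = w := by
  obtain ⟨p, j, hGR, hcross⟩ := hW.exists_ridge hG
  have hp : (pairUnion p).erase (p j + 2 * (j : ℕ) + 1) ⊆ pairUnion p := Finset.erase_subset _ _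
  have hq := erase_right_subset_pairUnion_shiftDown p j
  have hcard : ((pairUnion p).erase (p j + 2 * (j : ℕ) + 1)).card = 2 * e - 1 := by
    rw [Finset.card_erase_of_mem (right_mem_pairUnion p j), card_pairUnion]
  have heq {c : Fin e →o ℕ} := eq_or_eq_shiftDown (a := p) (j := j) (c := c)
  by_cases hpW : p ∈ W
  · have hqW : shiftDown p j ∉ W := by tauto
    refine ⟨_, ⟨⟨p, hpW, hp⟩, _, hqW, hq⟩, hGR, hcard, p, hpW, fun c hc => ⟨fun h => ?_, ?_⟩⟩
    · exact (heq h).resolve_right fun h => hqW (h ▸ hc)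
    · rintro rfl
      exact hp
  · have hqW : shiftDown p j ∈ W := by tauto
    refine ⟨_, ⟨⟨_, hqW, hq⟩, p, hpW, hp⟩, hGR, hcard, _, hqW, fun c hc => ⟨fun h => ?_, ?_⟩⟩
    · exact (heq h).resolve_left fun h => hpW (h ▸ hc)
    · rintro rfl
      exact hq

theorem pureComplex_pairSphere (hW : IsSqueezedFamily l M W) : PureComplex (pairSphere W) :=
  pureComplex_of_exists_card_eq fun _ hG =>
    let ⟨R, hR, hGR, hcard, _⟩ := hW.exists_ridge_unique hG
    ⟨R, hR, hGR, hcard⟩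

end IsSqueezedFamily

theorem facets_pairBall_eq_image (G : Finset ℕ) :
    {H | H ∈ pairBall W ∧ H.card = 2 * e ∧ G ⊆ H} =
      pairUnion '' {a ∈ W | G ⊆ pairUnion a} := by
  ext H
  constructor
  · rintro ⟨⟨a, ha, hH⟩, hcard, hGH⟩
    obtain rfl := Finset.eq_of_subset_of_card_le hH (by rw [hcard, card_pairUnion])
    exact ⟨a, ⟨ha, hGH⟩, rfl⟩
  · rintro ⟨a, ⟨ha, hG⟩, rfl⟩
    exact ⟨⟨a, ha, subset_rfl⟩, card_pairUnion a, hG⟩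

theorem ncard_facets_pairBall (G : Finset ℕ) :
    {H | H ∈ pairBall W ∧ H.card = 2 * e ∧ G ⊆ H}.ncard = {a ∈ W | G ⊆ pairUnion a}.ncard := by
  rw [facets_pairBall_eq_image]
  exact Set.ncard_image_of_injective _ fun a b h => eq_of_pairUnion_subset h.subset

theorem IsSqueezedFamily.complexBoundary_pairBall {l M : ℕ} {W : Set (Fin (e + 1) →o ℕ)}
    (hW : IsSqueezedFamily l M W) : complexBoundary (2 * e + 1) (pairBall W) = pairSphere W := by
  ext F
  constructor
  · rintro ⟨G, hFG, ⟨a, ha, hGa⟩, hcard, hone⟩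
    obtain ⟨x, hx, hxG⟩ : ∃ x ∈ pairUnion a, x ∉ G := Finset.exists_mem_notMem_of_card_lt_card
      (by rw [hcard, card_pairUnion]; omega)
    obtain ⟨b, hne, hb⟩ := exists_ne_erase_subset_pairUnion
      (fun i => hW.pos.trans_le (hW.lower a ha i)) hx
    have hGb : G ⊆ pairUnion b := (Finset.subset_erase.2 ⟨hGa, hxG⟩).trans hb
    refine isLowerSet_pairSphere W hFG ⟨⟨a, ha, hGa⟩, b, fun hbW => hne ?_, hGb⟩
    rw [show 2 * e + 1 + 1 = 2 * (e + 1) by ring, ncard_facets_pairBall] at hone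
    obtain ⟨w, hw⟩ := Set.ncard_eq_one.1 hone
    exact (hw.subset ⟨hbW, hGb⟩).trans (hw.subset ⟨ha, hGa⟩).symm
  · intro hF
    obtain ⟨R, hR, hFR, hcard, w, hw, huniq⟩ := hW.exists_ridge_unique hF
    refine ⟨R, hFR, hR.1, hcard, ?_⟩
    rw [show 2 * e + 1 + 1 = 2 * (e + 1) by ring, ncard_facets_pairBall, Set.ncard_eq_one]
    refine ⟨w, Set.ext fun c => ⟨fun ⟨hc, hRc⟩ => (huniq c hc).1 hRc, ?_⟩⟩
    rintro rfl
    exact ⟨hw, (huniq _ hw).2 rfl⟩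

end PairSphere

section ContractEdge

variable {e : ℕ}

theorem le_of_mem_pairUnion {a : Fin e →o ℕ} {v x : ℕ} (hv : ∀ i, v ≤ a i)
    (hx : x ∈ pairUnion a) : v ≤ x := by
  obtain ⟨i, hi⟩ := mem_pairUnion.1 hx
  have := hv i
  omega

theorem zero_le_of_mem_pairUnion {a : Fin (e + 1) →o ℕ} {x : ℕ} (hx : x ∈ pairUnion a) :
    a 0 ≤ x :=
  le_of_mem_pairUnion (fun i => a.monotone (Fin.zero_le i)) hx

/-- The sequence of the pairs of index at least `1`, renumbered from `0`. -/
def tailShift (a : Fin (e + 1) →o ℕ) : Fin e →o ℕ where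
  toFun i := a i.succ + 2
  monotone' _ _ h := Nat.add_le_add_right (a.monotone (Fin.succ_le_succ_iff.2 h)) 2

theorem tailShift_apply (a : Fin (e + 1) →o ℕ) (i : Fin e) : tailShift a i = a i.succ + 2 :=
  rfl

theorem mem_pairUnion_iff_tailShift {a : Fin (e + 1) →o ℕ} {x : ℕ} :
    x ∈ pairUnion a ↔ x = a 0 ∨ x = a 0 + 1 ∨ x ∈ pairUnion (tailShift a) := by
  simp only [mem_pairUnion, Fin.exists_fin_succ, Fin.val_zero, Fin.val_succ, tailShift_apply,
    mul_zero, add_zero, or_assoc]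
  refine or_congr_right (or_congr_right (exists_congr fun i => ?_))
  omega

theorem mem_pairUnion_tailShift {a : Fin (e + 1) →o ℕ} {x : ℕ} (hx : x ∈ pairUnion a)
    (hax : a 0 + 1 < x) : x ∈ pairUnion (tailShift a) := by
  rcases mem_pairUnion_iff_tailShift.1 hx with h | h | h
  · omega
  · omega
  · exact h

theorem exists_tailShift_eq {l : ℕ} {b : Fin e →o ℕ} (hb : ∀ i, l + 2 ≤ b i) :
    ∃ a : Fin (e + 1) →o ℕ, a 0 = l ∧ tailShift a = b := by
  have hl (i : Fin e) : l ≤ b i - 2 := by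
    have := hb i
    omega
  refine ⟨⟨Fin.cons l fun i => b i - 2, fun i j hij => ?_⟩, rfl, ?_⟩
  · induction i using Fin.cases with
    | zero => induction j using Fin.cases with
      | zero => exact le_rfl
      | succ j => exact hl j
    | succ i => induction j using Fin.cases with
      | zero => exact absurd hij (by simp)
      | succ j => exact Nat.sub_le_sub_right (b.monotone (Fin.succ_le_succ_iff.1 hij)) 2
  · ext i
    exact Nat.sub_add_cancel (le_trans (by omega) (hb i))

theorem le_iff_tailShift_le {a b : Fin (e + 1) →o ℕ} :
    a ≤ b ↔ a 0 ≤ b 0 ∧ tailShift a ≤ tailShift b := by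
  simp only [OrderHom.le_def, Fin.forall_fin_succ, tailShift_apply, Nat.add_le_add_iff_right]

/-- The family of the link of the edge `{l, l + 1}`: the sequences of `W` with first value `l`,
with this value removed. -/
def edgeLinkFamily (l : ℕ) (W : Set (Fin (e + 1) →o ℕ)) : Set (Fin e →o ℕ) :=
  tailShift '' {a ∈ W | a 0 = l}

theorem tailShift_mem_edgeLinkFamily {l : ℕ} {W : Set (Fin (e + 1) →o ℕ)} {a : Fin (e + 1) →o ℕ}
    (ha : a 0 = l) : tailShift a ∈ edgeLinkFamily l W ↔ a ∈ W := by
  constructor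
  · rintro ⟨b, ⟨hb, hb0⟩, hab⟩
    have h0 := hb0.trans ha.symm
    rwa [← le_antisymm (le_iff_tailShift_le.2 ⟨h0.le, hab.le⟩)
      (le_iff_tailShift_le.2 ⟨h0.ge, hab.ge⟩)]
  · exact fun h => ⟨a, ⟨h, ha⟩, rfl⟩

namespace IsSqueezedFamily

variable {l M : ℕ} {W : Set (Fin (e + 1) →o ℕ)} {a : Fin (e + 1) →o ℕ}

theorem apply_zero_eq (hW : IsSqueezedFamily l M W) (ha : a ∈ W) (hl : l ∈ pairUnion a) :
    a 0 = l :=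
  (zero_le_of_mem_pairUnion hl).antisymm (hW.lower a ha 0)

theorem notMem_of_apply_lt (hW : IsSqueezedFamily l M W) (ha : a 0 < l) : a ∉ W :=
  fun h => (hW.lower a h 0).not_gt ha

theorem const_le (hW : IsSqueezedFamily l M W) : l ≤ M :=
  hW.lower _ hW.const_mem 0

theorem filter_lt (hW : IsSqueezedFamily l M W) (hlM : l < M) :
    IsSqueezedFamily (l + 1) M {a ∈ W | l < a 0} where
  pos := l.succ_pos
  lower a ha i := ha.2.trans_le (a.monotone (Fin.zero_le i))
  upper a ha := hW.upper a ha.1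
  mem_of_le a ha b hab hb := ⟨hW.mem_of_le a ha.1 b hab hb, ha.2.trans_le (hab 0)⟩
  const_mem := ⟨hW.const_mem, hlM⟩

theorem edgeLink (hW : IsSqueezedFamily l M W) (ha : a ∈ W) (ha0 : a 0 = l) :
    IsSqueezedFamily (l + 2) (M + 2) (edgeLinkFamily l W) where
  pos := by omega
  lower := by
    rintro _ ⟨b, ⟨hb, -⟩, rfl⟩ i
    exact Nat.add_le_add_right (hW.lower b hb i.succ) 2
  upper := by
    rintro _ ⟨b, ⟨hb, -⟩, rfl⟩ i
    exact Nat.add_le_add_right (hW.upper b hb i.succ) 2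
  mem_of_le := by
    rintro _ ⟨b, ⟨hb, hb0⟩, rfl⟩ c hbc hc
    obtain ⟨c, hc0, rfl⟩ := exists_tailShift_eq (l := l) (b := c) fun i =>
      (Nat.add_le_add_right (hW.lower b hb i.succ) 2).trans (hbc i)
    exact (tailShift_mem_edgeLinkFamily hc0).2 (hW.mem_of_le b hb c
      (le_iff_tailShift_le.2 ⟨(hb0.trans hc0.symm).le, hbc⟩)
      (le_iff_tailShift_le (b := OrderHom.const _ M).2 ⟨hc0.trans_le hW.const_le, hc⟩))
  const_mem := by
    obtain ⟨c, hc0, hc⟩ := exists_tailShift_eq (l := l) (b := OrderHom.const (Fin e) (M + 2))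
      fun _ => Nat.add_le_add_right hW.const_le 2
    have hac : tailShift a ≤ tailShift c := hc ▸ fun i => Nat.add_le_add_right (hW.upper a ha _) 2
    rw [← hc, tailShift_mem_edgeLinkFamily hc0]
    exact hW.mem_of_le a ha c (le_iff_tailShift_le.2 ⟨(ha0.trans hc0.symm).le, hac⟩)
      (le_iff_tailShift_le (b := OrderHom.const _ M).2 ⟨hc0.trans_le hW.const_le, hc.le⟩)

end IsSqueezedFamily

end ContractEdge

namespace IsSqueezedFamily

variable {e l M : ℕ} {W : Set (Fin (e + 1) →o ℕ)} {a b : Fin (e + 1) →o ℕ} {G X : Finset ℕ}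

theorem exists_notMem_apply_zero_eq (hW : IsSqueezedFamily l M W) (hb0 : b 0 < l)
    (hG : G ⊆ pairUnion b) (hlG : ∀ x ∈ G, l ≤ x) :
    ∃ c : Fin (e + 1) →o ℕ, c 0 = l - 1 ∧ c ∉ W ∧ G ⊆ pairUnion c := by
  have hc0 : (b ⊔ OrderHom.const _ (l - 1)) 0 = l - 1 := by
    simp only [OrderHom.coe_sup, Pi.sup_apply, OrderHom.const_coe_coe, Function.const_apply]
    omega
  refine ⟨_, hc0, hW.notMem_of_apply_lt (by omega), fun x hx => ?_⟩
  have := hlG x hx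
  exact mem_pairUnion_sup_const (hG hx) (by omega)

theorem mem_pairBall_compl_edgeLinkFamily (hW : IsSqueezedFamily l M W) (hb : b ∉ W)
    (hlG : ∀ x ∈ G, l + 2 ≤ x) (hGb : G ∪ {l, l + 1} ⊆ pairUnion b) :
    G ∈ pairBall (edgeLinkFamily l W)ᶜ := by
  rcases (zero_le_of_mem_pairUnion (hGb (by simp : l ∈ _))).eq_or_lt with hb0 | hb0
  · refine ⟨tailShift b, (tailShift_mem_edgeLinkFamily hb0).not.2 hb, fun x hx => ?_⟩
    exact mem_pairUnion_tailShift (hGb (Finset.mem_union_left _ hx)) (by grind)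
  · obtain ⟨c, hc0, -, hGc⟩ := hW.exists_notMem_apply_zero_eq hb0 hGb (by grind)
    have hl1 : l + 1 ∈ pairUnion (tailShift c) :=
      mem_pairUnion_tailShift (hGc (by simp)) (by omega)
    refine ⟨tailShift c, ?_, fun x hx => ?_⟩
    · rintro ⟨a, ⟨ha, -⟩, hac⟩
      have hl2 (i : Fin e) : l + 2 ≤ tailShift c i :=
        hac ▸ Nat.add_le_add_right (hW.lower a ha i.succ) 2
      have := le_of_mem_pairUnion hl2 hl1
      omega
    · exact mem_pairUnion_tailShift (hGc (Finset.mem_union_left _ hx)) (by grind)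

theorem mem_pairBall_compl_of_edgeLinkFamily (hW : IsSqueezedFamily l M W)
    (hlG : ∀ x ∈ G, l + 2 ≤ x) (hG : G ∈ pairBall (edgeLinkFamily l W)ᶜ) :
    G ∪ {l, l + 1} ∈ pairBall Wᶜ := by
  obtain ⟨c, hc, hGc⟩ := hG
  by_cases hlc : ∀ i, l + 2 ≤ c i
  · obtain ⟨b, hb0, rfl⟩ := exists_tailShift_eq hlc
    refine ⟨b, (tailShift_mem_edgeLinkFamily hb0).not.1 hc, fun x hx => ?_⟩
    rw [mem_pairUnion_iff_tailShift]
    grind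
  · obtain ⟨i, hi⟩ := not_forall.1 hlc
    have hl1 := self_mem_pairUnion_sup_const (Nat.le_of_lt_succ (not_le.1 hi))
    have hpos := hW.pos
    obtain ⟨b, hb0, hb⟩ := exists_tailShift_eq (l := l - 1) (b := c ⊔ OrderHom.const _ (l + 1))
      fun k => le_trans (by omega) (le_max_right (c k) (l + 1))
    refine ⟨b, hW.notMem_of_apply_lt (by omega), fun x hx => ?_⟩
    rw [mem_pairUnion_iff_tailShift, hb]
    rcases Finset.mem_union.1 hx with hx | hx
    · exact .inr (.inr (mem_pairUnion_sup_const (hGc hx) (by grind)))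
    · grind

theorem linkOf_pairSphere (hW : IsSqueezedFamily l M W) :
    linkOf (pairSphere W) {l, l + 1} = pairSphere (edgeLinkFamily l W) := by
  ext G
  constructor
  · rintro ⟨hdisj, ⟨a, ha, hGa⟩, b, hb, hGb⟩
    have ha0 : a 0 = l := hW.apply_zero_eq ha (hGa (by simp))
    have hlG : ∀ x ∈ G, l + 2 ≤ x := fun x hx => by
      have := zero_le_of_mem_pairUnion (hGa (Finset.mem_union_left _ hx))
      grind [Finset.disjoint_left]
    refine ⟨⟨tailShift a, (tailShift_mem_edgeLinkFamily ha0).2 ha, fun x hx => ?_⟩,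
      hW.mem_pairBall_compl_edgeLinkFamily hb hlG hGb⟩
    exact mem_pairUnion_tailShift (hGa (Finset.mem_union_left _ hx)) (by grind)
  · rintro ⟨⟨_, ⟨a, ⟨ha, ha0⟩, rfl⟩, hGa⟩, hG⟩
    have hlG : ∀ x ∈ G, l + 2 ≤ x := fun x hx => le_of_mem_pairUnion
      (fun i => Nat.add_le_add_right (hW.lower a ha i.succ) 2) (hGa hx)
    refine ⟨Finset.disjoint_left.2 (by grind), ⟨a, ha, fun x hx => ?_⟩,
      hW.mem_pairBall_compl_of_edgeLinkFamily hlG hG⟩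
    rw [mem_pairUnion_iff_tailShift]
    grind

theorem shiftUp_zero_mem (hW : IsSqueezedFamily l M W) (hlM : l < M) (ha : a ∈ W) (ha0 : a 0 = l) :
    shiftUp a 0 ∈ {b ∈ W | l < b 0} := by
  have hle : a ≤ shiftUp a 0 := fun i => by
    change a i ≤ shiftUp a 0 i
    rw [shiftUp_apply]
    split_ifs <;> omega
  refine ⟨hW.mem_of_le a ha _ hle fun i => ?_, by rw [shiftUp_apply_self]; omega⟩
  have := hW.upper a ha i
  rw [shiftUp_apply]
  split_ifs <;> omega

theorem shiftDown_zero_notMem (hW : IsSqueezedFamily l M W) (hb0 : b 0 = l) :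
    shiftDown b 0 ∉ W := by
  have hpos := hW.pos
  exact hW.notMem_of_apply_lt (by rw [shiftDown_apply_self]; omega)

theorem contraction_pairSphere_subset (hW : IsSqueezedFamily l M W) (hlM : l < M) :
    contraction (pairSphere W) l (l + 1) ⊆ pairSphere {a ∈ W | l < a 0} := by
  intro G hG
  have hup (a : Fin (e + 1) →o ℕ) (ha0 : a 0 = l) :
      (pairUnion a).erase l ⊆ pairUnion (shiftUp a 0) := by
    simpa [ha0] using erase_left_subset_pairUnion_shiftUp a 0
  obtain ⟨hl, ⟨⟨a, ha, hGa⟩, b, hb, hGb⟩ | ⟨-, ⟨a, ha, hGa⟩, -⟩⟩ :=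
    (mem_contraction_iff (isLowerSet_pairSphere W) (by omega)).1 hG
  · refine ⟨?_, b, fun h => hb h.1, hGb⟩
    rcases (hW.lower a ha 0).eq_or_lt with ha0 | ha0
    · exact ⟨_, hW.shiftUp_zero_mem hlM ha ha0.symm,
        (Finset.subset_erase.2 ⟨hGa, hl⟩).trans (hup a ha0.symm)⟩
    · exact ⟨a, ⟨ha, ha0⟩, hGa⟩
  · have ha0 : a 0 = l := hW.apply_zero_eq ha (hGa (by simp))
    refine ⟨⟨_, hW.shiftUp_zero_mem hlM ha ha0, fun x hx => ?_⟩, a, fun h => h.2.ne' ha0,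
      fun x hx => ?_⟩
    · by_cases hxl : x = l + 1
      · exact mem_pairUnion.2 ⟨0, .inl (by simp [shiftUp_apply_self, hxl, ha0])⟩
      · exact hup a ha0 (by grind)
    · by_cases hxl : x = l + 1
      · exact mem_pairUnion.2 ⟨0, .inr (by simp [hxl, ha0])⟩
      · exact hGa (by grind)

theorem subset_contraction_pairSphere (hW : IsSqueezedFamily l M W) :
    pairSphere {a ∈ W | l < a 0} ⊆ contraction (pairSphere W) l (l + 1) := by
  rintro G ⟨⟨a, ⟨ha, hla⟩, hGa⟩, b, hbW', hGb⟩
  have hl : l ∉ G := fun hl => hla.not_ge (zero_le_of_mem_pairUnion (hGa hl))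
  have hpos := hW.pos
  refine (mem_contraction_iff (isLowerSet_pairSphere W) (by omega)).2 ⟨hl, ?_⟩
  by_cases hb : b ∈ W
  · have hb0 : b 0 = l := (not_lt.1 fun h => hbW' ⟨hb, h⟩).antisymm (hW.lower b hb 0)
    have hdown : (pairUnion b).erase (l + 1) ⊆ pairUnion (shiftDown b 0) := by
      simpa [hb0] using erase_right_subset_pairUnion_shiftDown b 0
    by_cases hl1 : l + 1 ∈ G
    · refine .inr ⟨hl1, ⟨b, hb, fun x hx => ?_⟩, _, hW.shiftDown_zero_notMem hb0, fun x hx => ?_⟩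
      · by_cases hxl : x = l
        · exact mem_pairUnion.2 ⟨0, .inl (by simp [hxl, hb0])⟩
        · exact hGb (by grind)
      · by_cases hxl : x = l
        · refine mem_pairUnion.2 ⟨0, .inr ?_⟩
          rw [shiftDown_apply_self, hb0, Fin.val_zero]
          omega
        · exact hdown (by grind)
    · exact .inl ⟨⟨a, ha, hGa⟩, _, hW.shiftDown_zero_notMem hb0,
        (Finset.subset_erase.2 ⟨hGb, hl1⟩).trans hdown⟩
  · exact .inl ⟨⟨a, ha, hGa⟩, b, hb, hGb⟩

theorem contraction_pairSphere (hW : IsSqueezedFamily l M W) (hlM : l < M) :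
    contraction (pairSphere W) l (l + 1) = pairSphere {a ∈ W | l < a 0} :=
  (hW.contraction_pairSphere_subset hlM).antisymm hW.subset_contraction_pairSphere

end IsSqueezedFamily

theorem exists_apply_eq_of_Icc_subset {e v s : ℕ} {a : Fin e →o ℕ} (hv : ∀ i, v ≤ a i)
    (h : Finset.Icc v (v + 2 * s) ⊆ pairUnion a) : ∃ j : Fin e, (j : ℕ) = s ∧ a j = v := by
  obtain ⟨k, hk⟩ := mem_pairUnion.1 (h (Finset.right_mem_Icc.2 (by omega)))
  have hvk := hv k
  induction s generalizing k with
  | zero => exact ⟨k, by omega⟩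
  | succ s ih =>
    have hs := (Finset.Icc_subset_Icc_right (show v + 2 * s ≤ v + 2 * (s + 1) by omega)).trans h
    obtain ⟨i, hi⟩ := mem_pairUnion.1 (hs (Finset.right_mem_Icc.2 (by omega)))
    obtain ⟨j, rfl, hj⟩ := ih hs i hi (hv i)
    rcases le_or_gt k j with hkj | hkj
    · have := a.monotone hkj
      have : (k : ℕ) ≤ j := hkj
      omega
    · have : (j : ℕ) < k := hkj
      exact ⟨k, by omega⟩

theorem exists_notMem_and_Ico_subset (X : Finset ℕ) (l : ℕ) :
    ∃ r, l + r ∉ X ∧ Finset.Ico l (l + r) ⊆ X := by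
  have hex : ∃ r, l + r ∉ X := by
    obtain ⟨r, hr⟩ := X.bddAbove
    exact ⟨r + 1, fun h => by have := hr h; omega⟩
  refine ⟨Nat.find hex, Nat.find_spec hex, fun x hx => ?_⟩
  obtain ⟨hlx, hxl⟩ := Finset.mem_Ico.1 hx
  have hmin := not_not.1 (Nat.find_min hex (m := x - l) (by omega))
  rwa [Nat.add_sub_cancel' hlx] at hmin

namespace IsSqueezedFamily

variable {e l M : ℕ} {W : Set (Fin (e + 1) →o ℕ)} {a b : Fin (e + 1) →o ℕ} {X : Finset ℕ}

theorem mem_pairBall_compl_of_odd_gap (hW : IsSqueezedFamily l M W) (ha : a ∈ W)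
    (hX : X ⊆ pairUnion a) {s : ℕ} (hs : Finset.Icc l (l + 2 * s) ⊆ X) (hgap : l + 2 * s + 1 ∉ X) :
    X ∈ pairBall Wᶜ := by
  obtain ⟨j, rfl, hj⟩ := exists_apply_eq_of_Icc_subset (hW.lower a ha) (hs.trans hX)
  have hXa : X ⊆ (pairUnion a).erase (a j + 2 * (j : ℕ) + 1) :=
    Finset.subset_erase.2 ⟨hX, hj ▸ hgap⟩
  refine ⟨shiftDown a j, fun h => ?_, hXa.trans (erase_right_subset_pairUnion_shiftDown a j)⟩
  have := hW.lower _ h j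
  have := hW.pos
  rw [shiftDown_apply_self] at *
  omega

theorem mem_pairBall_compl_of_even_gap (hW : IsSqueezedFamily l M W) (hlM : l < M) (hb : b ∉ W)
    (hb0 : b 0 = l + 1) (hX : X ⊆ pairUnion b) {s : ℕ}
    (hs : Finset.Icc (l + 1) (l + 1 + 2 * s) ⊆ X) (hgap : l + 2 * s + 2 ∉ X) :
    insert l X ∈ pairBall Wᶜ := by
  have hbl (i : Fin (e + 1)) : l + 1 ≤ b i := hb0.symm.trans_le (b.monotone (Fin.zero_le i))
  obtain ⟨j, rfl, hj⟩ := exists_apply_eq_of_Icc_subset hbl (hs.trans hX)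
  have hXb : X ⊆ (pairUnion b).erase (b j + 2 * (j : ℕ) + 1) :=
    Finset.subset_erase.2 ⟨hX, by rwa [hj, show l + 1 + 2 * (j : ℕ) + 1 = l + 2 * j + 2 by ring]⟩
  refine ⟨shiftDown b j, fun h => hb (hW.mem_of_le _ h b (shiftDown_le b j) fun i => ?_),
    Finset.insert_subset (mem_pairUnion.2 ⟨0, .inl ?_⟩)
      (hXb.trans (erase_right_subset_pairUnion_shiftDown b j))⟩
  · rcases le_or_gt i j with hij | hij
    · exact (b.monotone hij).trans (by omega)
    · simpa [shiftDown_apply, hij.not_ge] using hW.upper _ h i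
  · rw [shiftDown_apply, if_pos (Fin.zero_le j), hb0, hj, Fin.val_zero]
    omega

theorem mem_pairBall_compl_of_apply_zero_eq_succ (hW : IsSqueezedFamily l M W) (hlM : l < M)
    (ha : a ∈ W) (hXa : insert l X ⊆ pairUnion a) (hb : b ∉ W) (hb0 : b 0 = l + 1)
    (hXb : X ⊆ pairUnion b) (hl1 : l + 1 ∈ X) : insert l X ∈ pairBall Wᶜ := by
  -- The parity of the first gap decides whether to lower `a` below `l` or to lower `b` to `l`.
  obtain ⟨r, hr, hIco⟩ := exists_notMem_and_Ico_subset (insert l X) l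
  have hr0 : r ≠ 0 := by
    rintro rfl
    exact hr (Finset.mem_insert_self l X)
  have hr1 : r ≠ 1 := by
    rintro rfl
    exact hr (Finset.mem_insert_of_mem hl1)
  obtain ⟨s, rfl | rfl⟩ := Nat.even_or_odd' r
  · obtain ⟨s, rfl⟩ := Nat.exists_eq_succ_of_ne_zero (show s ≠ 0 by omega)
    refine hW.mem_pairBall_compl_of_even_gap hlM hb hb0 hXb (s := s) (fun x hx => ?_)
      fun h => hr (Finset.mem_insert_of_mem h)
    obtain ⟨hlx, hxs⟩ := Finset.mem_Icc.1 hx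
    exact Finset.mem_of_mem_insert_of_ne (hIco (Finset.mem_Ico.2 (by omega))) (by omega)
  · refine hW.mem_pairBall_compl_of_odd_gap ha hXa (s := s) (fun x hx => hIco ?_) hr
    rw [Finset.mem_Icc] at hx
    rw [Finset.mem_Ico]
    omega

theorem linkCondition_pairSphere (hW : IsSqueezedFamily l M W) (hlM : l < M) :
    LinkCondition (pairSphere W) l (l + 1) := by
  refine (linkCondition_iff (isLowerSet_pairSphere W)).2 ?_
  rintro G - - ⟨⟨a, ha, hGa⟩, -⟩ ⟨-, b, hb, hGb⟩
  obtain ⟨hla, hGa⟩ := Finset.insert_subset_iff.1 hGa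
  have ha0 : a 0 = l := hW.apply_zero_eq ha hla
  have hXa : insert l (insert (l + 1) G) ⊆ pairUnion a :=
    Finset.insert_subset hla
      (Finset.insert_subset (mem_pairUnion.2 ⟨0, .inr (by simp [ha0])⟩) hGa)
  refine ⟨⟨a, ha, hXa⟩, ?_⟩
  rcases lt_trichotomy (b 0) l with hb0 | hb0 | hb0
  · obtain ⟨c, hc0, hc, hGc⟩ := hW.exists_notMem_apply_zero_eq hb0 hGb fun x hx =>
      ha0.symm.trans_le (zero_le_of_mem_pairUnion (hXa (Finset.mem_insert_of_mem hx)))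
    exact ⟨c, hc, Finset.insert_subset (mem_pairUnion.2 ⟨0, .inr (by simp [hc0]; omega)⟩) hGc⟩
  · exact ⟨b, hb, Finset.insert_subset (mem_pairUnion.2 ⟨0, .inl (by simp [hb0])⟩) hGb⟩
  · have hl1 : l + 1 ∈ insert (l + 1) G := Finset.mem_insert_self _ G
    exact hW.mem_pairBall_compl_of_apply_zero_eq_succ hlM ha hXa hb
      ((zero_le_of_mem_pairUnion (hGb hl1)).antisymm hb0) hGb hl1

end IsSqueezedFamily

namespace IsSqueezedFamily

variable {e l M : ℕ} {T : Finset ℕ}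

theorem mem_pairSphere_of_subset_singleton {W : Set (Fin (e + 1) →o ℕ)}
    (hW : IsSqueezedFamily l M W) (hT : T ⊆ {M + 2 * e + 1}) : T ∈ pairSphere W := by
  refine ⟨⟨_, hW.const_mem, hT.trans ?_⟩, OrderHom.const _ (M + 1), fun h => ?_, hT.trans ?_⟩
  · exact Finset.singleton_subset_iff.2 (mem_pairUnion.2 ⟨Fin.last e, .inr rfl⟩)
  · exact absurd (hW.upper _ h 0) (Nat.not_succ_le_self M)
  · refine Finset.singleton_subset_iff.2 (mem_pairUnion.2 ⟨Fin.last e, .inl ?_⟩)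
    simp only [OrderHom.const_coe_coe, Function.const_apply, Fin.val_last]
    omega

theorem pairSphere_of_one_pair {W : Set (Fin 1 →o ℕ)} {a : Fin 1 →o ℕ}
    (hW : IsSqueezedFamily l M W) (ha : a ∈ W) (ha0 : a 0 = l) :
    pairSphere W = {F | F ⊆ {l, M + 1} ∧ F ≠ {l, M + 1}} := by
  have mem_iff {b : Fin 1 →o ℕ} {x : ℕ} : x ∈ pairUnion b ↔ x = b 0 ∨ x = b 0 + 1 := by
    simp [mem_pairUnion]
  have hpos := hW.pos
  have hlM := hW.const_le
  ext G
  constructor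
  · rintro ⟨⟨b, hb, hGb⟩, c, hc, hGc⟩
    have hlb := hW.lower b hb 0
    have hbM := hW.upper b hb 0
    have hc0 : c 0 < l ∨ M < c 0 := by
      by_contra! h
      refine hc (hW.mem_of_le a ha c (fun i => ?_) fun i => ?_) <;> rw [Subsingleton.elim i 0]
      · exact ha0.trans_le h.1
      · exact h.2
    have hG {x : ℕ} (hx : x ∈ G) : x = l ∧ c 0 < l ∨ x = M + 1 ∧ M < c 0 := by
      have := mem_iff.1 (hGb hx)
      have := mem_iff.1 (hGc hx)
      omega
    refine ⟨fun x hx => by have := hG hx; grind, ?_⟩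
    rintro rfl
    have := @hG l (by simp)
    have := @hG (M + 1) (by simp)
    omega
  · rintro ⟨hG, hne⟩
    obtain ⟨x, hx, hxG⟩ := Finset.exists_of_ssubset (hG.ssubset_of_ne hne)
    rcases Finset.mem_insert.1 hx with rfl | hx
    · exact hW.mem_pairSphere_of_subset_singleton (e := 0) (by grind)
    · refine ⟨⟨a, ha, fun y hy => mem_iff.2 (by grind)⟩, OrderHom.const _ (l - 1),
        hW.notMem_of_apply_lt (Nat.sub_one_lt hpos.ne'), fun y hy => mem_iff.2 ?_⟩
      simp only [OrderHom.const_coe_coe, Function.const_apply]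
      grind

theorem eq_singleton_const {W : Set (Fin e →o ℕ)} (hW : IsSqueezedFamily M M W) :
    W = {OrderHom.const _ M} :=
  Set.eq_singleton_iff_unique_mem.2 ⟨hW.const_mem, fun a ha =>
    OrderHom.ext _ _ (funext fun i => (hW.upper a ha i).antisymm (hW.lower a ha i))⟩

theorem stronglyEdgeDecomposable_linkOf_of_eq {W : Set (Fin (e + 1) →o ℕ)}
    (hW : IsSqueezedFamily M M W) (hT : T ⊆ {M + 2 * e + 1}) :
    StronglyEdgeDecomposable (linkOf (pairSphere W) T) := by
  have hTW := hW.mem_pairSphere_of_subset_singleton hT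
  rw [hW.eq_singleton_const] at *
  rw [pairSphere_singleton fun _ => hW.pos] at *
  exact .linkOf_simplexBoundary (hTW.1.ssubset_of_ne hTW.2)

theorem stronglyEdgeDecomposable_linkOf_of_one_pair {W : Set (Fin 1 →o ℕ)} {a : Fin 1 →o ℕ}
    (hW : IsSqueezedFamily l M W) (ha : a ∈ W) (ha0 : a 0 = l) (hT : T ⊆ {M + 1}) :
    StronglyEdgeDecomposable (linkOf (pairSphere W) T) := by
  have hTW := hW.mem_pairSphere_of_subset_singleton (e := 0) hT
  rw [hW.pairSphere_of_one_pair ha ha0] at *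
  exact .linkOf_simplexBoundary (hTW.1.ssubset_of_ne hTW.2)

theorem filter_induction {P : Set (Fin (e + 1) →o ℕ) → Prop}
    (h : ∀ {l W a}, IsSqueezedFamily l M W → a ∈ W → a 0 = l →
      (l < M → P {b ∈ W | l < b 0}) → P W)
    {W : Set (Fin (e + 1) →o ℕ)} (hW : IsSqueezedFamily l M W) : P W := by
  induction hk : M - l generalizing l W with
  | zero =>
    exact h hW hW.const_mem (hW.const_le.antisymm' (by omega)) fun hlM => absurd hlM (by omega)
  | succ k ih =>
    have hfilter : P {b ∈ W | l < b 0} := ih (hW.filter_lt (by omega)) (by omega)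
    by_cases ha : ∃ a ∈ W, a 0 = l
    · obtain ⟨a, ha, ha0⟩ := ha
      exact h hW ha ha0 fun _ => hfilter
    · push Not at ha
      rwa [Set.sep_eq_self_iff_mem_true.2 fun b hb =>
        (hW.lower b hb 0).lt_of_ne (ha b hb).symm] at hfilter

theorem stronglyEdgeDecomposable_linkOf_pairSphere {W : Set (Fin (e + 1) →o ℕ)}
    (hW : IsSqueezedFamily l M W) (hT : T ⊆ {M + 2 * e + 1}) :
    StronglyEdgeDecomposable (linkOf (pairSphere W) T) := by
  induction e generalizing l M with
  | zero =>
    exact hW.filter_induction (P := fun W => StronglyEdgeDecomposable (linkOf (pairSphere W) T))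
      fun hW ha ha0 _ => hW.stronglyEdgeDecomposable_linkOf_of_one_pair ha ha0 hT
  | succ e ihe =>
    refine hW.filter_induction (P := fun W => StronglyEdgeDecomposable (linkOf (pairSphere W) T))
      fun {l W a} hW ha ha0 ih => ?_
    rcases hW.const_le.eq_or_lt with rfl | hlM
    · exact hW.stronglyEdgeDecomposable_linkOf_of_eq hT
    have hlink := hW.edgeLink ha ha0
    have hT' : T ⊆ {M + 2 + 2 * e + 1} := hT.trans (by grind)
    refine .linkOf_of_contract (isLowerSet_pairSphere W) hW.pureComplex_pairSphere l.lt_succ_self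
      ?_ (hW.linkCondition_pairSphere hlM) ?_ ?_
    · rw [hW.linkOf_pairSphere]
      exact hlink.mem_pairSphere_of_subset_singleton hT'
    · rw [hW.contraction_pairSphere hlM]
      exact ih hlM
    · rw [hW.linkOf_pairSphere]
      exact ihe hlink hT'

end IsSqueezedFamily

section PaddedSort

variable {M i : ℕ} {u : Multiset ℕ}

/-- The increasing enumeration of `u`, continued by the constant `M`. -/
noncomputable def paddedSort (M : ℕ) (u : Multiset ℕ) (i : ℕ) : ℕ :=
  (u.sort (· ≤ ·)).getD i M

theorem getD_sort_eq_paddedSort (M k : ℕ) (hi : i < u.card) :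
    (u.sort (· ≤ ·)).getD i k = paddedSort M u i := by
  rw [← Multiset.length_sort (· ≤ ·)] at hi
  rw [paddedSort, List.getD_eq_getElem _ _ hi, List.getD_eq_getElem _ _ hi]

theorem paddedSort_mem (M : ℕ) (hi : i < u.card) : paddedSort M u i ∈ u := by
  rw [← Multiset.length_sort (· ≤ ·)] at hi
  rw [paddedSort, List.getD_eq_getElem _ _ hi]
  exact (Multiset.mem_sort _).1 (List.getElem_mem hi)

theorem paddedSort_of_card_le (M : ℕ) (hi : u.card ≤ i) : paddedSort M u i = M :=
  List.getD_eq_default _ _ (by rwa [Multiset.length_sort])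

theorem paddedSort_le (hu : ∀ x ∈ u, x ≤ M) (i : ℕ) : paddedSort M u i ≤ M := by
  rcases lt_or_ge i u.card with hi | hi
  · exact hu _ (paddedSort_mem M hi)
  · exact (paddedSort_of_card_le M hi).le

theorem monotone_paddedSort (hu : ∀ x ∈ u, x ≤ M) : Monotone (paddedSort M u) := by
  intro i j hij
  rcases lt_or_ge j u.card with hj | hj
  · rw [← Multiset.length_sort (· ≤ ·)] at hj
    rw [paddedSort, paddedSort, List.getD_eq_getElem _ _ hj,
      List.getD_eq_getElem _ _ (hij.trans_lt hj)]
    exact (Multiset.pairwise_sort u (· ≤ ·)).sortedLE.getElem_le_getElem_of_le hij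
  · exact (paddedSort_le hu i).trans (paddedSort_of_card_le M hj).ge

theorem ofFn_getD {α : Type*} {N : ℕ} {L : List α} (k : α) (hL : L.length ≤ N) :
    List.ofFn (fun i : Fin N => L.getD i k) = L ++ List.replicate (N - L.length) k := by
  refine List.ext_getElem (by simp; omega) fun i h1 h2 => ?_
  rw [List.getElem_ofFn, List.getElem_append]
  split_ifs with h
  · exact List.getD_eq_getElem _ _ h
  · rw [List.getElem_replicate]
    exact List.getD_eq_default _ _ (not_lt.1 h)

theorem filter_map_paddedSort {N : ℕ} (hu : ∀ x ∈ u, x < M) (hcard : u.card ≤ N) :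
    ((Finset.univ.val.map fun i : Fin N => paddedSort M u i).filter (· < M)) = u := by
  unfold paddedSort
  rw [Fin.univ_val_map, ofFn_getD M (by simpa using hcard), ← Multiset.coe_add,
    Multiset.filter_add, Multiset.sort_eq, Multiset.filter_eq_self.2 hu, Multiset.filter_eq_nil.2,
    add_zero]
  intro x hx
  rw [List.eq_of_mem_replicate (Multiset.mem_coe.1 hx)]
  exact lt_irrefl M

theorem getD_filter_lt {L : List ℕ} (hL : L.Pairwise (· ≤ ·)) (hM : ∀ x ∈ L, x ≤ M) (i : ℕ) :
    (L.filter (· < M)).getD i M = L.getD i M := by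
  induction L generalizing i with
  | nil => rfl
  | cons x L ih =>
    rw [List.pairwise_cons] at hL
    by_cases hx : x < M
    · rw [List.filter_cons_of_pos (by simpa using hx)]
      cases i with
      | zero => rfl
      | succ i => exact ih hL.2 (fun y hy => hM y (List.mem_cons_of_mem x hy)) i
    · have hall : ∀ y ∈ x :: L, y = M := fun y hy => by
        refine (hM y hy).antisymm ((not_lt.1 hx).trans ?_)
        exact (List.mem_cons.1 hy).elim Eq.ge (hL.1 y)
      rw [List.filter_eq_nil_iff.2 (by simpa using fun y hy => (hall y hy).ge), List.getD_nil,
        (List.eq_replicate_iff.2 ⟨rfl, hall⟩ : x :: L = _)]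
      grind

theorem paddedSort_filter_map {N : ℕ} (a : Fin N →o ℕ) (hM : ∀ i, a i ≤ M) (i : Fin N) :
    paddedSort M ((Finset.univ.val.map a).filter (· < M)) i = a i := by
  have hsort : (List.ofFn a).Pairwise (· ≤ ·) := a.monotone.sortedLE_ofFn.pairwise
  unfold paddedSort
  rw [Fin.univ_val_map, Multiset.filter_coe, Multiset.coe_sort,
    List.mergeSort_of_pairwise (by simpa using hsort.filter _),
    getD_filter_lt hsort (by simpa [List.mem_ofFn] using hM),
    List.getD_eq_getElem _ _ (by simp), List.getElem_ofFn]

end PaddedSort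

theorem IsShiftedOrderIdeal.add_filter_mem {m M : ℕ} {U : Set (Multiset ℕ)}
    (hU : IsShiftedOrderIdeal m U) (hM : M ≤ m + 1) {s t : Multiset ℕ}
    (hst : Multiset.Rel (· ≤ ·) s t) (r : Multiset ℕ) (hr : r + s.filter (· < M) ∈ U) :
    r + t.filter (· < M) ∈ U := by
  obtain ⟨-, -, -, hdiv, hshift⟩ := hU
  induction hst generalizing r with
  | zero => exact hr
  | @cons x y s t hxy _ ih =>
    by_cases hx : x < M
    · rw [Multiset.filter_cons_of_pos (p := (· < M)) _ hx, Multiset.add_cons] at hr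
      by_cases hy : y < M
      · rw [Multiset.filter_cons_of_pos (p := (· < M)) _ hy, Multiset.add_cons, ← Multiset.cons_add]
        refine ih _ ?_
        rw [Multiset.cons_add]
        rcases hxy.lt_or_eq with h | rfl
        · exact hshift _ x y h (by omega) hr
        · exact hr
      · rw [Multiset.filter_cons_of_neg (p := (· < M)) _ hy]
        exact ih r (hdiv _ hr _ (Multiset.le_cons_self _ _))
    · rw [Multiset.filter_cons_of_neg (p := (· < M)) _ hx] at hr
      rw [Multiset.filter_cons_of_neg (p := (· < M)) _ (by omega)]
      exact ih r hr

section SqueezedSphere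

/-- The sequences of indices of the monomials in `U`, sorted and continued by `n - d`. The pairs
of such a sequence cover the facet `F_d(u)` of the squeezed ball. -/
def squeezedFamily (n d : ℕ) (U : Set (Multiset ℕ)) : Set (Fin (d / 2 + 1) →o ℕ) :=
  {a | ∃ u ∈ U, ∀ i, a i = paddedSort (n - d) u i}

/-- The vertices beyond `n` which complete a facet of a squeezed `d`-ball to a union of pairs:
`n + 1` if `d` is even, and none if `d` is odd. -/
def extraVertices (n d : ℕ) : Finset ℕ :=
  Finset.Ioc n (n - d + 2 * (d / 2) + 1)

variable {n d : ℕ} {U : Set (Multiset ℕ)}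

theorem mem_extraVertices {x : ℕ} :
    x ∈ extraVertices n d ↔ n < x ∧ x ≤ n - d + 2 * (d / 2) + 1 :=
  Finset.mem_Ioc

theorem extraVertices_subset_singleton (hdn : d < n) :
    extraVertices n d ⊆ {n - d + 2 * (d / 2) + 1} := fun x hx => by
  rw [mem_extraVertices] at hx
  rw [Finset.mem_singleton]
  omega

theorem card_extraVertices (hdn : d < n) : d + (extraVertices n d).card = 2 * (d / 2) + 1 := by
  rw [extraVertices, Nat.card_Ioc]
  omega

theorem IsShiftedOrderIdeal.lt_of_mem (hdn : d < n) (hU : IsShiftedOrderIdeal (n - d - 1) U)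
    {u : Multiset ℕ} (hu : u ∈ U) {x : ℕ} (hx : x ∈ u) : x < n - d := by
  have := Finset.mem_Icc.1 (hU.1 u hu x hx)
  omega

theorem isSqueezedFamily_squeezedFamily (hdn : d < n) (hU : IsShiftedOrderIdeal (n - d - 1) U)
    (hdeg : ∀ u ∈ U, 2 * u.card ≤ d + 1) : IsSqueezedFamily 1 (n - d) (squeezedFamily n d U) where
  pos := Nat.one_pos
  lower := by
    rintro a ⟨u, hu, ha⟩ i
    rw [ha]
    rcases lt_or_ge (i : ℕ) u.card with hi | hi
    · exact (Finset.mem_Icc.1 (hU.1 u hu _ (paddedSort_mem _ hi))).1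
    · rw [paddedSort_of_card_le _ hi]
      omega
  upper := by
    rintro a ⟨u, hu, ha⟩ i
    rw [ha]
    exact paddedSort_le (fun x hx => (hU.lt_of_mem hdn hu hx).le) i
  mem_of_le := by
    rintro a ⟨u, hu, ha⟩ b hab hb
    refine ⟨_, ?_, fun i => (paddedSort_filter_map b hb i).symm⟩
    rw [← zero_add (Multiset.filter _ _)]
    refine hU.add_filter_mem (by omega) (s := Finset.univ.val.map a)
      (Multiset.rel_map.2 (Multiset.rel_refl_of_refl_on fun i _ => hab i)) 0 ?_
    have hcard := hdeg u hu
    rwa [zero_add, funext ha,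
      filter_map_paddedSort (fun x hx => hU.lt_of_mem hdn hu hx) (by omega)]
  const_mem := ⟨0, hU.2.1, fun _ => (paddedSort_of_card_le _ (Nat.zero_le _)).symm⟩

theorem extraVertices_subset_pairUnion (hdn : d < n) {u : Multiset ℕ} (hcard : 2 * u.card ≤ d + 1)
    {a : Fin (d / 2 + 1) →o ℕ} (ha : ∀ i, a i = paddedSort (n - d) u i) :
    extraVertices n d ⊆ pairUnion a := fun x hx => by
  rw [mem_extraVertices] at hx
  refine mem_pairUnion.2 ⟨Fin.last _, ?_⟩
  rw [ha, Fin.val_last, paddedSort_of_card_le _ (by omega)]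
  omega

theorem Fd_eq_pairUnion_sdiff (hdn : d < n) {u : Multiset ℕ} (hu : ∀ x ∈ u, x < n - d)
    (hcard : 2 * u.card ≤ d + 1) {a : Fin (d / 2 + 1) →o ℕ}
    (ha : ∀ i, a i = paddedSort (n - d) u i) : Fd n d u = pairUnion a \ extraVertices n d := by
  ext x
  simp only [Fd, Finset.mem_sdiff, mem_pairUnion, mem_extraVertices, Finset.mem_union,
    Finset.mem_biUnion, Finset.mem_range, Finset.mem_insert, Finset.mem_singleton,
    Finset.mem_Icc, ha]
  constructor
  · rintro (⟨j, hj, hx⟩ | hx)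
    · rw [getD_sort_eq_paddedSort (n - d) _ hj] at hx
      have := hu _ (paddedSort_mem (n - d) hj)
      exact ⟨⟨⟨j, by omega⟩, hx⟩, by omega⟩
    · refine ⟨⟨⟨(x - (n - d)) / 2, by omega⟩, ?_⟩, by omega⟩
      rw [paddedSort_of_card_le _ (by dsimp only; omega)]
      dsimp only
      omega
  · rintro ⟨⟨i, hi⟩, hx⟩
    by_cases hik : (i : ℕ) < u.card
    · exact .inl ⟨i, hik, by rwa [getD_sort_eq_paddedSort (n - d) _ hik]⟩
    · rw [paddedSort_of_card_le _ (not_lt.1 hik)] at hi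
      have := i.isLt
      exact .inr (by omega)

theorem squeezedBall_eq_linkOf_pairBall (hdn : d < n) (hU : IsShiftedOrderIdeal (n - d - 1) U)
    (hdeg : ∀ u ∈ U, 2 * u.card ≤ d + 1) :
    squeezedBall n d U = linkOf (pairBall (squeezedFamily n d U)) (extraVertices n d) := by
  ext G
  constructor
  · rintro ⟨u, hu, hG⟩
    have hmono := monotone_paddedSort fun x hx => (hU.lt_of_mem hdn hu hx).le
    let a : Fin (d / 2 + 1) →o ℕ := ⟨fun i => paddedSort (n - d) u i, fun _ _ h => hmono h⟩
    rw [Fd_eq_pairUnion_sdiff (a := a) hdn (fun x hx => hU.lt_of_mem hdn hu hx) (hdeg u hu)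
      fun _ => rfl, Finset.subset_sdiff] at hG
    exact ⟨hG.2, a, ⟨u, hu, fun _ => rfl⟩, Finset.union_subset hG.1
      (extraVertices_subset_pairUnion hdn (hdeg u hu) fun _ => rfl)⟩
  · rintro ⟨hdisj, a, ⟨u, hu, ha⟩, hG⟩
    refine ⟨u, hu, ?_⟩
    rw [Fd_eq_pairUnion_sdiff hdn (fun x hx => hU.lt_of_mem hdn hu hx) (hdeg u hu) ha]
    exact Finset.subset_sdiff.2 ⟨Finset.subset_union_left.trans hG, hdisj⟩

theorem squeezedSphere_eq_linkOf_pairSphere (hdn : d < n)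
    (hU : IsShiftedOrderIdeal (n - d - 1) U) (hdeg : ∀ u ∈ U, 2 * u.card ≤ d + 1) :
    squeezedSphere n d U = linkOf (pairSphere (squeezedFamily n d U)) (extraVertices n d) := by
  rw [squeezedSphere, squeezedBall_eq_linkOf_pairBall hdn hU hdeg, complexBoundary_linkOf,
    card_extraVertices hdn,
    (isSqueezedFamily_squeezedFamily hdn hU hdeg).complexBoundary_pairBall]

end SqueezedSphere

/-- Proposition 5.4. Squeezed spheres are strongly edge decomposable. -/
theorem stmt16 (n d : ℕ) (hd : 0 < d) (hdn : d < n) (U : Set (Multiset ℕ))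
    (hU : IsShiftedOrderIdeal (n - d - 1) U)
    (hdeg : ∀ u ∈ U, 2 * Multiset.card u ≤ d + 1) :
    StronglyEdgeDecomposable (squeezedSphere n d U) := by
  rw [squeezedSphere_eq_linkOf_pairSphere hdn hU hdeg]
  exact (isSqueezedFamily_squeezedFamily hdn hU hdeg).stronglyEdgeDecomposable_linkOf_pairSphere
    (extraVertices_subset_singleton hdn)
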